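/- arXiv:2211.17261 — 4 statements merged into one kernel-verified Lean document; each statement's English description precedes it below -/
import Mathlib

section
/- Let p be a prime and B a commutative ring with p·B = 0. Then the center of the Weyl algebra W_d(B) is exactly the B-subalgebra generated by the 2d elements x_1^p, …, x_d^p, y_1^p, …, y_d^p, and these elements are algebraically independent over B; that is, the center of W_d(B) is isomorphic as a B-algebra to a polynomial ring over B in 2d variables, via the map sending the variables to x_i^p and y_i^p. -/
/-!
Statement 0: For a prime `p` and a commutative ring `B` with `p·B = 0`, the center of the
Weyl algebra `W_d(B)` is exactly the `B`-subalgebra generated by the elements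
`x_1^p, …, x_d^p, y_1^p, …, y_d^p`, and these are algebraically independent over `B`;
i.e. the center is the image of a polynomial ring under the (injective) `B`-algebra map
sending the variables to the `x_i^p` and `y_j^p`.
-/

noncomputable section

open FreeAlgebra

/-- The defining relations of the Weyl algebra `W_d(B)`: the `x_i` (indexed by `Sum.inl i`)
commute with each other, the `y_j` (indexed by `Sum.inr j`) commute with each other, and
`y_j x_i = x_i y_j + δ_{ij}`. -/
inductive WeylRel (B : Type) [CommRing B] (d : ℕ) :
    FreeAlgebra B (Fin d ⊕ Fin d) → FreeAlgebra B (Fin d ⊕ Fin d) → Prop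
  | xx (i j : Fin d) :
      WeylRel B d (ι B (Sum.inl i) * ι B (Sum.inl j)) (ι B (Sum.inl j) * ι B (Sum.inl i))
  | yy (i j : Fin d) :
      WeylRel B d (ι B (Sum.inr i) * ι B (Sum.inr j)) (ι B (Sum.inr j) * ι B (Sum.inr i))
  | yx (i j : Fin d) :
      WeylRel B d (ι B (Sum.inr j) * ι B (Sum.inl i))
        (ι B (Sum.inl i) * ι B (Sum.inr j) + if i = j then 1 else 0)

/-- The Weyl algebra `W_d(B)`: the quotient of the free associative `B`-algebra on
`x_1, …, x_d, y_1, …, y_d` by the two-sided ideal generated by the Weyl relations. -/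
abbrev WeylAlgebra (B : Type) [CommRing B] (d : ℕ) : Type := RingQuot (WeylRel B d)

/-- The images of the generators in the Weyl algebra (`Sum.inl i ↦ x_i`, `Sum.inr j ↦ y_j`). -/
def weylGen (B : Type) [CommRing B] (d : ℕ) (v : Fin d ⊕ Fin d) : WeylAlgebra B d :=
  RingQuot.mkAlgHom B (WeylRel B d) (ι B v)

/-!
Normal ordering, with the `x_i` to the left and the `y_j` to the right, is a `B`-linear bijection
`B[x, y] → W_d(B)`: letting `x_i` act on `B[x, y]` as multiplication by `x_i` and `y_j` as
multiplication by `y_j` plus `∂/∂x_j` recovers a polynomial from its normally ordered value by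
applying the latter to `1`. Under this bijection the commutators with `y_j` and `x_j` become
`∂/∂x_j` and `-∂/∂y_j`, so the center corresponds to the polynomials killed by all partial
derivatives. As `p` is a prime that vanishes in `B`, these are the polynomials in the `p`-th powers
of the variables, on which normal ordering is multiplicative.
-/

theorem lie_mul {A : Type*} [Ring A] (a b c : A) : ⁅a, b * c⁆ = ⁅a, b⁆ * c + b * ⁅a, c⁆ := by
  simp only [Ring.lie_def]
  noncomm_ring

theorem mul_lie {A : Type*} [Ring A] (a b c : A) : ⁅a * b, c⁆ = a * ⁅b, c⁆ + ⁅a, c⁆ * b := by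
  simp only [Ring.lie_def]
  noncomm_ring

section PolynomialRings

open MvPolynomial

variable {R σ : Type*}

open scoped IsMulCommutative in
/-- Evaluation of multivariate polynomials at pairwise commuting elements of an algebra that need
not be commutative. It takes values in the commutative subalgebra generated by these elements. -/
def aevalOfCommute [CommSemiring R] {A : Type*} [Semiring A] [Algebra R A] (a : σ → A)
    (ha : ∀ i j, Commute (a i) (a j)) : MvPolynomial σ R →ₐ[R] A :=
  have : IsMulCommutative (Algebra.adjoin R (Set.range a)) :=
    Algebra.isMulCommutative_adjoin R <| by
      rintro _ ⟨i, rfl⟩ _ ⟨j, rfl⟩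
      exact ha i j
  (Algebra.adjoin R (Set.range a)).val.comp
    (aeval fun i => ⟨a i, Algebra.subset_adjoin (Set.mem_range_self i)⟩)

@[simp]
theorem aevalOfCommute_X [CommSemiring R] {A : Type*} [Semiring A] [Algebra R A] (a : σ → A)
    (ha : ∀ i j, Commute (a i) (a j)) (i : σ) :
    aevalOfCommute (R := R) a ha (X i) = a i := by
  simp [aevalOfCommute]

theorem pderiv_comm [CommRing R] (i j : σ) (f : MvPolynomial σ R) :
    pderiv i (pderiv j f) = pderiv j (pderiv i f) := by
  classical
  have h : ⁅(pderiv i : Derivation R (MvPolynomial σ R) _), pderiv j⁆ = 0 :=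
    derivation_ext fun k => by
      rw [Derivation.commutator_apply, pderiv_X, pderiv_X, Pi.single_apply, Pi.single_apply]
      split_ifs <;> simp
  rw [← sub_eq_zero, ← Derivation.commutator_apply, h, Derivation.zero_apply]

theorem exists_expand_eq_of_forall_dvd [CommSemiring R] {n : ℕ} {f : MvPolynomial σ R}
    (hf : ∀ m ∈ f.support, ∀ v, n ∣ m v) : ∃ g, expand n g = f := by
  refine ⟨∑ m ∈ f.support, monomial (m.mapRange (· / n) (Nat.zero_div n)) (coeff m f), ?_⟩
  rw [map_sum]
  conv_rhs => rw [f.as_sum]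
  refine Finset.sum_congr rfl fun m hm => ?_
  have hmul : n • m.mapRange (· / n) (Nat.zero_div n) = m := by
    ext v
    simp [Nat.mul_div_cancel' (hf m hm v)]
  rw [expand_monomial, hmul]

theorem isUnit_natCast_of_not_dvd [CommRing R] {p : ℕ} (hp : p.Prime)
    (hpR : (p : R) = 0) {n : ℕ} (hn : ¬p ∣ n) : IsUnit (n : R) := by
  have hcop : IsCoprime (p : R) (n : R) := (hp.coprime_iff_not_dvd.2 hn).cast
  rwa [hpR, isCoprime_zero_left] at hcop

theorem dvd_of_pderiv_eq_zero [CommRing R] {p : ℕ} (hp : p.Prime) (hpR : (p : R) = 0)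
    {f : MvPolynomial σ R} {v : σ} (hf : pderiv v f = 0) {m : σ →₀ ℕ} (hm : m ∈ f.support) :
    p ∣ m v := by
  by_contra hv
  have hle : Finsupp.single v 1 ≤ m := by
    rw [Finsupp.single_le_iff, Nat.one_le_iff_ne_zero]
    exact fun h => hv (h ▸ dvd_zero p)
  obtain ⟨m, rfl⟩ := exists_add_of_le hle
  rw [add_comm] at hm hv
  have hcoeff :
      coeff (m + Finsupp.single v 1) f * ((m + Finsupp.single v 1 : σ →₀ ℕ) v : R) = 0 := by
    simpa [hf] using (coeff_pderiv f m (i := v)).symm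
  have hunit := isUnit_natCast_of_not_dvd hp hpR hv
  exact mem_support_iff.1 hm (hunit.mul_left_eq_zero.1 hcoeff)

end PolynomialRings

namespace WeylAlgebra

open MvPolynomial

variable {B : Type} [CommRing B] {d : ℕ}

theorem weylGen_inl_commute (i j : Fin d) :
    Commute (weylGen B d (.inl i)) (weylGen B d (.inl j)) := by
  simpa [weylGen, commute_iff_eq] using RingQuot.mkAlgHom_rel B (WeylRel.xx (B := B) i j)

theorem weylGen_inr_commute (i j : Fin d) :
    Commute (weylGen B d (.inr i)) (weylGen B d (.inr j)) := by
  simpa [weylGen, commute_iff_eq] using RingQuot.mkAlgHom_rel B (WeylRel.yy (B := B) i j)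

theorem lie_weylGen_inr_inl (i j : Fin d) :
    ⁅weylGen B d (.inr j), weylGen B d (.inl i)⁆ = if i = j then 1 else 0 := by
  have h := RingQuot.mkAlgHom_rel B (WeylRel.yx (B := B) i j)
  rw [map_add, map_mul, map_mul, apply_ite (RingQuot.mkAlgHom B (WeylRel B d)), map_one,
    map_zero] at h
  rw [Ring.lie_def, sub_eq_iff_eq_add']
  exact h

theorem adjoin_range_weylGen : Algebra.adjoin B (Set.range (weylGen B d)) = ⊤ := by
  have h : Set.range (weylGen B d) = RingQuot.mkAlgHom B (WeylRel B d) '' Set.range (ι B) :=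
    Set.range_comp _ _
  rw [h, ← AlgHom.map_adjoin, adjoin_range_ι, Algebra.map_top, AlgHom.range_eq_top]
  exact RingQuot.mkAlgHom_surjective B _

@[elab_as_elim]
theorem induction_on {P : WeylAlgebra B d → Prop} (w : WeylAlgebra B d)
    (algebraMap : ∀ r, P (algebraMap B _ r)) (gen : ∀ v, P (weylGen B d v))
    (add : ∀ a b, P a → P b → P (a + b)) (mul : ∀ a b, P a → P b → P (a * b)) : P w := by
  have hw : w ∈ Algebra.adjoin B (Set.range (weylGen B d)) :=
    adjoin_range_weylGen (B := B) (d := d) ▸ Algebra.mem_top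
  induction hw using Algebra.adjoin_induction with
  | mem x hx =>
    obtain ⟨v, rfl⟩ := hx
    exact gen v
  | algebraMap r => exact algebraMap r
  | add a b _ _ ha hb => exact add a b ha hb
  | mul a b _ _ ha hb => exact mul a b ha hb

theorem mem_center_iff_commute_weylGen {w : WeylAlgebra B d} :
    w ∈ Subalgebra.center B (WeylAlgebra B d) ↔ ∀ v, Commute (weylGen B d v) w := by
  rw [Subalgebra.mem_center_iff]
  refine ⟨fun h v => h _, fun h u => ?_⟩
  change Commute u w
  induction u using induction_on with
  | algebraMap r => exact Algebra.commute_algebraMap_left r w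
  | gen v => exact h v
  | add a b ha hb => exact ha.add_left hb
  | mul a b ha hb => exact ha.mul_left hb

variable (B d) in
/-- The operators on the Weyl algebra out of which normal ordering is built: `x_i` acts by left and
`y_j` by right multiplication. Unlike the `x_i` and `y_j` themselves, these operators commute, so
polynomials can be evaluated at them. -/
def normalOrderHom : MvPolynomial (Fin d ⊕ Fin d) B →ₐ[B] Module.End B (WeylAlgebra B d) :=
  aevalOfCommute
    (Sum.elim (fun i => LinearMap.mulLeft B (weylGen B d (.inl i)))
      (fun j => LinearMap.mulRight B (weylGen B d (.inr j)))) <| by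
    rintro (i | i) (j | j)
    · ext w
      simp [← mul_assoc, (weylGen_inl_commute i j).eq]
    · exact LinearMap.commute_mulLeft_right _ _
    · exact (LinearMap.commute_mulLeft_right _ _).symm
    · ext w
      simp [mul_assoc, (weylGen_inr_commute i j).eq]

@[simp]
theorem normalOrderHom_X_inl (i : Fin d) :
    normalOrderHom B d (X (.inl i)) = LinearMap.mulLeft B (weylGen B d (.inl i)) :=
  aevalOfCommute_X _ _ _

@[simp]
theorem normalOrderHom_X_inr (j : Fin d) :
    normalOrderHom B d (X (.inr j)) = LinearMap.mulRight B (weylGen B d (.inr j)) :=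
  aevalOfCommute_X _ _ _

variable (B d) in
/-- Normal ordering: the linear map sending the monomial `x^a y^b` to the product `x^a y^b` in the
Weyl algebra, with all the `x_i` to the left of all the `y_j`. -/
def normalOrder : MvPolynomial (Fin d ⊕ Fin d) B →ₗ[B] WeylAlgebra B d :=
  LinearMap.applyₗ 1 ∘ₗ (normalOrderHom B d).toLinearMap

theorem normalOrder_apply (f : MvPolynomial (Fin d ⊕ Fin d) B) :
    normalOrder B d f = normalOrderHom B d f 1 :=
  rfl

@[simp]
theorem normalOrder_C (b : B) : normalOrder B d (C b) = algebraMap B _ b := by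
  rw [normalOrder_apply, ← algebraMap_eq, AlgHom.commutes, Module.algebraMap_end_apply,
    Algebra.algebraMap_eq_smul_one]

@[simp]
theorem normalOrder_one : normalOrder B d 1 = 1 := by
  rw [← C_1, normalOrder_C, map_one]

@[simp]
theorem normalOrder_mul_X_inl (f : MvPolynomial (Fin d ⊕ Fin d) B) (i : Fin d) :
    normalOrder B d (f * X (.inl i)) = weylGen B d (.inl i) * normalOrder B d f := by
  simp [normalOrder_apply, mul_comm f]

@[simp]
theorem normalOrder_mul_X_inr (f : MvPolynomial (Fin d ⊕ Fin d) B) (j : Fin d) :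
    normalOrder B d (f * X (.inr j)) = normalOrder B d f * weylGen B d (.inr j) := by
  simp [normalOrder_apply, mul_comm f]

theorem normalOrder_X_pow (v : Fin d ⊕ Fin d) (n : ℕ) :
    normalOrder B d (X v ^ n) = weylGen B d v ^ n := by
  rcases v with i | j <;> simp [normalOrder_apply, LinearMap.pow_mulLeft, LinearMap.pow_mulRight]

attribute [local instance] LieRing.ofAssociativeRing

theorem lie_weylGen_inr_normalOrder (j : Fin d) (f : MvPolynomial (Fin d ⊕ Fin d) B) :
    ⁅weylGen B d (.inr j), normalOrder B d f⁆ = normalOrder B d (pderiv (.inl j) f) := by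
  induction f using MvPolynomial.induction_on with
  | C b => simp [← commute_iff_lie_eq, Algebra.commute_algebraMap_right]
  | add f g hf hg => rw [map_add, lie_add, hf, hg, map_add, map_add]
  | mul_X f v hf =>
    rcases v with i | i
    · rw [normalOrder_mul_X_inl, lie_mul, lie_weylGen_inr_inl, hf, pderiv_mul, map_add,
        normalOrder_mul_X_inl, add_comm]
      obtain rfl | hij := eq_or_ne i j <;> simp [*]
    · rw [normalOrder_mul_X_inr, lie_mul, (weylGen_inr_commute j i).lie_eq, hf, pderiv_mul,
        pderiv_X_of_ne Sum.inr_ne_inl]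
      simp

theorem lie_normalOrder_weylGen_inl (j : Fin d) (f : MvPolynomial (Fin d ⊕ Fin d) B) :
    ⁅normalOrder B d f, weylGen B d (.inl j)⁆ = normalOrder B d (pderiv (.inr j) f) := by
  induction f using MvPolynomial.induction_on with
  | C b => simp [← commute_iff_lie_eq, Algebra.commute_algebraMap_left]
  | add f g hf hg => rw [map_add, add_lie, hf, hg, map_add, map_add]
  | mul_X f v hf =>
    rcases v with i | i
    · rw [normalOrder_mul_X_inl, mul_lie, (weylGen_inl_commute i j).lie_eq, hf, pderiv_mul,
        pderiv_X_of_ne Sum.inl_ne_inr]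
      simp
    · rw [normalOrder_mul_X_inr, mul_lie, lie_weylGen_inr_inl, hf, pderiv_mul, map_add,
        normalOrder_mul_X_inr, add_comm]
      obtain rfl | hij := eq_or_ne i j <;> simp [*, Ne.symm]

variable (B d) in
/-- The operators by which the generators of the Weyl algebra act on polynomials: `x_i` multiplies
by `x_i`, and `y_j` is multiplication by `y_j` plus `∂/∂x_j`. -/
def polynomialOperator : Fin d ⊕ Fin d → Module.End B (MvPolynomial (Fin d ⊕ Fin d) B) :=
  Sum.elim (fun i => LinearMap.mulRight B (X (.inl i)))
    (fun j => LinearMap.mulRight B (X (.inr j)) + (pderiv (.inl j)).toLinearMap)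

@[simp]
theorem polynomialOperator_inl_apply (i : Fin d) (f : MvPolynomial (Fin d ⊕ Fin d) B) :
    polynomialOperator B d (.inl i) f = f * X (.inl i) :=
  rfl

@[simp]
theorem polynomialOperator_inr_apply (j : Fin d) (f : MvPolynomial (Fin d ⊕ Fin d) B) :
    polynomialOperator B d (.inr j) f = f * X (.inr j) + pderiv (.inl j) f :=
  rfl

theorem lift_polynomialOperator_eq_of_weylRel
    ⦃a b : FreeAlgebra B (Fin d ⊕ Fin d)⦄ (h : WeylRel B d a b) :
    FreeAlgebra.lift B (polynomialOperator B d) a =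
      FreeAlgebra.lift B (polynomialOperator B d) b := by
  refine LinearMap.ext fun f => ?_
  rcases h with ⟨i, j⟩ | ⟨i, j⟩ | ⟨i, j⟩
  · simp [mul_right_comm]
  · simp only [map_mul, map_add, FreeAlgebra.lift_ι_apply, Module.End.mul_apply,
      polynomialOperator_inr_apply, pderiv_mul, pderiv_X_of_ne Sum.inr_ne_inl,
      pderiv_comm (Sum.inl i)]
    ring
  · have hX : pderiv (.inl j) (X (.inl i) : MvPolynomial (Fin d ⊕ Fin d) B) =
        if i = j then 1 else 0 := by
      obtain rfl | hij := eq_or_ne i j <;> simp [*]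
    simp only [map_mul, map_add, FreeAlgebra.lift_ι_apply, Module.End.mul_apply,
      LinearMap.add_apply, polynomialOperator_inl_apply, polynomialOperator_inr_apply,
      pderiv_mul, hX]
    split_ifs
    · rw [map_one, Module.End.one_apply]
      ring
    · rw [map_zero, LinearMap.zero_apply]
      ring

variable (B d) in
/-- The representation of the Weyl algebra on polynomials that corresponds, under normal ordering,
to its left regular representation. -/
def polynomialRep : WeylAlgebra B d →ₐ[B] Module.End B (MvPolynomial (Fin d ⊕ Fin d) B) :=
  RingQuot.liftAlgHom B ⟨FreeAlgebra.lift B (polynomialOperator B d),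
    lift_polynomialOperator_eq_of_weylRel⟩

@[simp]
theorem polynomialRep_weylGen (v : Fin d ⊕ Fin d) :
    polynomialRep B d (weylGen B d v) = polynomialOperator B d v := by
  rw [polynomialRep, weylGen, RingQuot.liftAlgHom_mkAlgHom_apply, FreeAlgebra.lift_ι_apply]

theorem polynomialRep_commute_mulRight_X_inr (w : WeylAlgebra B d) (j : Fin d) :
    Commute (polynomialRep B d w) (LinearMap.mulRight B (X (.inr j))) := by
  induction w using induction_on with
  | algebraMap r =>
    rw [AlgHom.commutes]
    exact Algebra.commute_algebraMap_left r _
  | gen v =>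
    rw [polynomialRep_weylGen]
    refine LinearMap.ext fun f => ?_
    rcases v with i | i
    · simp [mul_right_comm]
    · simp [add_mul, mul_right_comm, mul_comm (X _)]
  | add a b ha hb => simpa only [map_add] using ha.add_left hb
  | mul a b ha hb => simpa only [map_mul] using ha.mul_left hb

theorem polynomialRep_normalOrder_apply_one (f : MvPolynomial (Fin d ⊕ Fin d) B) :
    polynomialRep B d (normalOrder B d f) 1 = f := by
  induction f using MvPolynomial.induction_on with
  | C b => simp [Module.algebraMap_end_apply, smul_eq_C_mul]
  | add f g hf hg => rw [map_add, map_add, LinearMap.add_apply, hf, hg]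
  | mul_X f v hf =>
    rcases v with i | j
    · rw [normalOrder_mul_X_inl, map_mul, Module.End.mul_apply, hf, polynomialRep_weylGen,
        polynomialOperator_inl_apply]
    · have hcomm := LinearMap.congr_fun
        (polynomialRep_commute_mulRight_X_inr (normalOrder B d f) j).eq 1
      simp only [Module.End.mul_apply, LinearMap.mulRight_apply, hf] at hcomm
      rw [normalOrder_mul_X_inr, map_mul, Module.End.mul_apply, polynomialRep_weylGen,
        polynomialOperator_inr_apply, pderiv_one, add_zero, hcomm]

theorem normalOrder_polynomialRep (w : WeylAlgebra B d) (f : MvPolynomial (Fin d ⊕ Fin d) B) :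
    normalOrder B d (polynomialRep B d w f) = w * normalOrder B d f := by
  induction w using induction_on generalizing f with
  | algebraMap r =>
    rw [AlgHom.commutes, Module.algebraMap_end_apply, map_smul, Algebra.smul_def]
  | gen v =>
    rw [polynomialRep_weylGen]
    rcases v with i | j
    · rw [polynomialOperator_inl_apply, normalOrder_mul_X_inl]
    · rw [polynomialOperator_inr_apply, map_add, normalOrder_mul_X_inr,
        ← lie_weylGen_inr_normalOrder, Ring.lie_def, add_sub_cancel]
  | add a b ha hb => rw [map_add, LinearMap.add_apply, map_add, ha, hb, add_mul]
  | mul a b ha hb => rw [map_mul, Module.End.mul_apply, ha, hb, mul_assoc]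

theorem normalOrder_bijective : Function.Bijective (normalOrder B d) :=
  ⟨Function.LeftInverse.injective (g := fun w => polynomialRep B d w 1)
    polynomialRep_normalOrder_apply_one,
    fun w => ⟨polynomialRep B d w 1, by rw [normalOrder_polynomialRep, normalOrder_one, mul_one]⟩⟩

theorem normalOrder_mem_center_iff {f : MvPolynomial (Fin d ⊕ Fin d) B} :
    normalOrder B d f ∈ Subalgebra.center B (WeylAlgebra B d) ↔ ∀ v, pderiv v f = 0 := by
  rw [mem_center_iff_commute_weylGen, Sum.forall, Sum.forall, and_comm]
  refine and_congr (forall_congr' fun j => ?_) (forall_congr' fun j => ?_)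
  · rw [commute_iff_lie_eq, lie_weylGen_inr_normalOrder,
      map_eq_zero_iff _ normalOrder_bijective.injective]
  · rw [Commute.symm_iff, commute_iff_lie_eq, lie_normalOrder_weylGen_inl,
      map_eq_zero_iff _ normalOrder_bijective.injective]

theorem weylGen_pow_mem_center {n : ℕ} (hn : (n : B) = 0) (v : Fin d ⊕ Fin d) :
    weylGen B d v ^ n ∈ Subalgebra.center B (WeylAlgebra B d) := by
  rw [← normalOrder_X_pow, normalOrder_mem_center_iff]
  intro u
  rw [pderiv_pow, ← map_natCast (C (σ := Fin d ⊕ Fin d)), hn, map_zero, zero_mul, zero_mul]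

variable (d) in
/-- The substitution of the `n`-th powers of the generators, which are central if `n = 0` in `B`,
for the variables of a polynomial. -/
def aevalWeylGenPow {n : ℕ} (hn : (n : B) = 0) :
    MvPolynomial (Fin d ⊕ Fin d) B →ₐ[B] Subalgebra.center B (WeylAlgebra B d) :=
  aeval fun v => ⟨weylGen B d v ^ n, weylGen_pow_mem_center hn v⟩

theorem aevalWeylGenPow_X {n : ℕ} (hn : (n : B) = 0) (v : Fin d ⊕ Fin d) :
    (aevalWeylGenPow d hn (X v) : WeylAlgebra B d) = weylGen B d v ^ n := by
  rw [aevalWeylGenPow, aeval_X]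

theorem normalOrderHom_expand {n : ℕ} (hn : (n : B) = 0) (f : MvPolynomial (Fin d ⊕ Fin d) B) :
    normalOrderHom B d (expand n f) =
      LinearMap.mulLeft B (aevalWeylGenPow d hn f : WeylAlgebra B d) := by
  suffices h : (normalOrderHom B d).comp (expand n) = (Algebra.lmul B (WeylAlgebra B d)).comp
      ((Subalgebra.center B _).val.comp (aevalWeylGenPow d hn)) from DFunLike.congr_fun h f
  refine MvPolynomial.algHom_ext fun v => LinearMap.ext fun w => ?_
  have hcenter := Subalgebra.mem_center_iff.1 (weylGen_pow_mem_center hn v) w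
  rcases v with i | j <;>
    simp [aevalWeylGenPow_X, LinearMap.pow_mulLeft, LinearMap.pow_mulRight, hcenter]

theorem normalOrder_expand {n : ℕ} (hn : (n : B) = 0) (f : MvPolynomial (Fin d ⊕ Fin d) B) :
    normalOrder B d (expand n f) = aevalWeylGenPow d hn f := by
  rw [normalOrder_apply, normalOrderHom_expand hn, LinearMap.mulLeft_apply, mul_one]

theorem aevalWeylGenPow_injective {n : ℕ} (hn : (n : B) = 0) (hpos : 0 < n) :
    Function.Injective (aevalWeylGenPow d hn) := by
  intro f g hfg
  apply expand_injective hpos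
  apply normalOrder_bijective.injective
  rw [normalOrder_expand hn, normalOrder_expand hn, hfg]

theorem aevalWeylGenPow_surjective {p : ℕ} (hp : p.Prime) (hpB : (p : B) = 0) :
    Function.Surjective (aevalWeylGenPow d hpB) := by
  rintro ⟨w, hw⟩
  obtain ⟨f, rfl⟩ := normalOrder_bijective.surjective w
  have hf := normalOrder_mem_center_iff.1 hw
  obtain ⟨g, rfl⟩ := exists_expand_eq_of_forall_dvd fun _ hm v =>
    dvd_of_pderiv_eq_zero hp hpB (hf v) hm
  exact ⟨g, Subtype.ext (normalOrder_expand hpB g).symm⟩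

end WeylAlgebra

theorem center_of_weyl_algebra_is_polynomial_ring_on_p_th_powers
    (p : ℕ) (hp : p.Prime) (B : Type) [CommRing B] (hpB : (p : B) = 0) (d : ℕ) :
    ∃ f : MvPolynomial (Fin d ⊕ Fin d) B →ₐ[B] WeylAlgebra B d,
      (∀ v : Fin d ⊕ Fin d, f (MvPolynomial.X v) = weylGen B d v ^ p) ∧
      Function.Injective f ∧
      f.range = Subalgebra.center B (WeylAlgebra B d) := by
  refine ⟨(Subalgebra.center B _).val.comp (WeylAlgebra.aevalWeylGenPow d hpB),
    WeylAlgebra.aevalWeylGenPow_X hpB,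
    Subtype.val_injective.comp (WeylAlgebra.aevalWeylGenPow_injective hpB hp.pos), ?_⟩
  rw [AlgHom.range_comp, (AlgHom.range_eq_top _).2 (WeylAlgebra.aevalWeylGenPow_surjective hp hpB),
    Algebra.map_top, Subalgebra.range_val]
end
end

section
/- Let p be an odd prime, n ≥ 1, and let R be a commutative local ring with p·R = 0 and a distinguished element h ∈ R such that R is h-separable. Then every R-algebra automorphism φ of the Rees reduced Weyl algebra A(R) satisfying φ(a) ≡ a (mod h·A(R)) for all a ∈ A(R) is inner: there exists a unit u ∈ A(R)^× with φ(m) = u m u^{-1} for all m ∈ A(R). -/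
noncomputable section

/-- The defining relations of the Rees reduced Weyl algebra `A(R)` (with parameter `h ∈ R`):
the `x_i` (indexed by `Sum.inl i`) commute, the `y_j` (indexed by `Sum.inr j`) commute,
`y_j x_i = x_i y_j + δ_{ij}·h`, and `x_i^p = y_j^p = 0`. -/
inductive ReesWeylRel (p n : ℕ) (R : Type) [CommRing R] (h : R) :
    FreeAlgebra R (Fin n ⊕ Fin n) → FreeAlgebra R (Fin n ⊕ Fin n) → Prop
  | xx (i j : Fin n) :
      ReesWeylRel p n R h (FreeAlgebra.ι R (Sum.inl i) * FreeAlgebra.ι R (Sum.inl j))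
        (FreeAlgebra.ι R (Sum.inl j) * FreeAlgebra.ι R (Sum.inl i))
  | yy (i j : Fin n) :
      ReesWeylRel p n R h (FreeAlgebra.ι R (Sum.inr i) * FreeAlgebra.ι R (Sum.inr j))
        (FreeAlgebra.ι R (Sum.inr j) * FreeAlgebra.ι R (Sum.inr i))
  | yx (i j : Fin n) :
      ReesWeylRel p n R h (FreeAlgebra.ι R (Sum.inr j) * FreeAlgebra.ι R (Sum.inl i))
        (FreeAlgebra.ι R (Sum.inl i) * FreeAlgebra.ι R (Sum.inr j) +
          if i = j then algebraMap R (FreeAlgebra R (Fin n ⊕ Fin n)) h else 0)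
  | xp (i : Fin n) : ReesWeylRel p n R h (FreeAlgebra.ι R (Sum.inl i) ^ p) 0
  | yp (j : Fin n) : ReesWeylRel p n R h (FreeAlgebra.ι R (Sum.inr j) ^ p) 0

/-- The Rees reduced Weyl algebra `A(R)` on `2n` generators with parameter `h ∈ R`. -/
abbrev ReesWeyl (p n : ℕ) (R : Type) [CommRing R] (h : R) : Type :=
  RingQuot (ReesWeylRel p n R h)

/-- The generator `x_i` of the Rees reduced Weyl algebra. -/
def reesX (p n : ℕ) (R : Type) [CommRing R] (h : R) (i : Fin n) : ReesWeyl p n R h :=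
  RingQuot.mkAlgHom R (ReesWeylRel p n R h) (FreeAlgebra.ι R (Sum.inl i))

/-- The generator `y_j` of the Rees reduced Weyl algebra. -/
def reesY (p n : ℕ) (R : Type) [CommRing R] (h : R) (j : Fin n) : ReesWeyl p n R h :=
  RingQuot.mkAlgHom R (ReesWeylRel p n R h) (FreeAlgebra.ι R (Sum.inr j))

/-!
Suppose `φ` is the identity modulo `h`, and let `z_s` run over the `2n` generators. Since `A(R)` is
commutative modulo `h`, the operator `u ↦ φ(z_s) u - u z_s` has values in `h A(R)`; as `h` is
regular, it is `h D_s` for a unique linear `D_s`. The twisted commutators `D_s` commute and satisfy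
`D_s ^ p = 0`, because `φ(z_s)` and the `z_s` satisfy the same relations. If `Z_t` is right
multiplication by the element dual to `z_t` (`-y_i` for `x_i`, and `x_j` for `y_j`), then
`D_s Z_t = Z_t D_s + δ_{st}`.

A canonical pair `D Z = Z D + 1` with `D ^ p = 0` splits a module into `p` copies of `ker D`, so
`A(R)` is a sum of `p ^ (2n)` copies of `L = ⋂ ker D_s = {v | φ(m) v = v m for all m}`. By the
Poincaré–Birkhoff–Witt theorem `A(R)` is free of rank `p ^ (2n)`, so over the local ring `R` the
summand `L` is free of rank one, say `L = R v`. The `Z_t` generate `A(R)` from `L`, hence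
`v A(R) = A(R)`; thus `v` is a unit and `φ(m) = v m v⁻¹`.
-/

open LinearMap (ker)
open Module (finrank)

section CanonicalPair

variable {E : Type*} [Semiring E] {D Z : E}

lemma mul_pow_succ_of_mul_eq_mul_add_one (hDZ : D * Z = Z * D + 1) (k : ℕ) :
    D * Z ^ (k + 1) = Z ^ (k + 1) * D + (k + 1) • Z ^ k := by
  induction k with
  | zero => simpa using hDZ
  | succ k ih =>
    rw [pow_succ Z (k + 1), ← mul_assoc, ih, add_mul, mul_assoc, hDZ, smul_mul_assoc, ← pow_succ,
      succ_nsmul _ (k + 1), mul_add, mul_one, ← mul_assoc]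
    abel

lemma pow_succ_mul_of_mul_eq_mul_add_one (hDZ : D * Z = Z * D + 1) (k : ℕ) :
    D ^ (k + 1) * Z = Z * D ^ (k + 1) + (k + 1) • D ^ k := by
  induction k with
  | zero => simpa using hDZ
  | succ k ih =>
    rw [pow_succ' D (k + 1), mul_assoc, ih, mul_add, ← mul_assoc, hDZ, mul_smul_comm, ← pow_succ',
      succ_nsmul _ (k + 1), add_mul, one_mul, mul_assoc]
    abel

end CanonicalPair

section PowerDecomposition

variable {R M : Type*} [CommRing R] [AddCommGroup M] [Module R M] {D Z : Module.End R M}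
  {K : Submodule R M} {N : ℕ}

lemma pow_apply_pow_apply_of_mem_ker (hDZ : D * Z = Z * D + 1) {v : M} (hv : v ∈ ker D)
    (j k : ℕ) : (D ^ j) ((Z ^ k) v) = k.descFactorial j • (Z ^ (k - j)) v := by
  have apply_pow : ∀ k : ℕ, D ((Z ^ k) v) = k • (Z ^ (k - 1)) v := by
    rintro (_ | k)
    · simpa using hv
    · rw [← Module.End.mul_apply, mul_pow_succ_of_mul_eq_mul_add_one hDZ, LinearMap.add_apply,
        Module.End.mul_apply, LinearMap.mem_ker.mp hv, map_zero, zero_add, LinearMap.smul_apply,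
        Nat.add_sub_cancel]
  induction j with
  | zero => simp
  | succ j ih =>
    rw [pow_succ', Module.End.mul_apply, ih, map_nsmul, apply_pow, smul_smul, Nat.sub_sub,
      Nat.descFactorial_succ, mul_comm]

lemma exists_eq_sum_pow_apply_of_pow_apply_eq_zero (hDZ : D * Z = Z * D + 1)
    (hKD : ∀ v ∈ K, D v ∈ K) (hKZ : ∀ v ∈ K, Z v ∈ K) (hN : ∀ k < N, IsUnit (k.factorial : R))
    {a : M} (ha : a ∈ K) (hDa : (D ^ N) a = 0) :
    ∃ v : ℕ → M, (∀ k, v k ∈ ker D ⊓ K) ∧ a = ∑ k ∈ Finset.range N, (Z ^ k) (v k) := by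
  induction N generalizing a with
  | zero => exact ⟨0, fun _ => zero_mem _, by simpa using hDa⟩
  | succ N ih =>
    -- The top coefficient is `D ^ N a / N!`; subtracting its term leaves an element of `ker D ^ N`.
    obtain ⟨c, hc⟩ := (hN N N.lt_succ_self).exists_left_inv
    have htop : (D ^ N) a ∈ ker D ⊓ K :=
      ⟨LinearMap.mem_ker.mpr (by rwa [← Module.End.mul_apply, ← pow_succ']),
        Module.End.pow_apply_mem_of_forall_mem _ hKD _ ha⟩
    set w := c • (D ^ N) a with hw
    have hwK : w ∈ ker D ⊓ K := Submodule.smul_mem _ c htop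
    have hDNw : (D ^ N) ((Z ^ N) w) = (D ^ N) a := by
      rw [pow_apply_pow_apply_of_mem_ker hDZ hwK.1, Nat.descFactorial_self, Nat.sub_self, pow_zero,
        Module.End.one_apply, ← Nat.cast_smul_eq_nsmul R, smul_smul, mul_comm, hc, one_smul]
    obtain ⟨v, hvK, hv⟩ := ih (a := a - (Z ^ N) w) (fun k hk => hN k (by omega))
      (sub_mem ha (Module.End.pow_apply_mem_of_forall_mem _ hKZ _ hwK.2)) (by simp [hDNw])
    refine ⟨Function.update v N w, fun k => ?_, ?_⟩
    · rcases eq_or_ne k N with rfl | hk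
      · simpa using hwK
      · simpa [hk] using hvK k
    · rw [Finset.sum_range_succ, Function.update_self, ← sub_eq_iff_eq_add, hv]
      refine Finset.sum_congr rfl fun k hk => ?_
      rw [Function.update_of_ne (Finset.mem_range.mp hk).ne]

lemma eq_zero_of_sum_pow_apply_eq_zero (hDZ : D * Z = Z * D + 1)
    (hN : ∀ k < N, IsUnit (k.factorial : R)) {v : ℕ → M} (hv : ∀ k, v k ∈ ker D)
    (hsum : ∑ k ∈ Finset.range N, (Z ^ k) (v k) = 0) :
    ∀ k < N, v k = 0 := by
  induction N with
  | zero => simp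
  | succ N ih =>
    have hDN : (D ^ N) (∑ k ∈ Finset.range (N + 1), (Z ^ k) (v k)) = N.factorial • v N := by
      rw [map_sum, Finset.sum_range_succ, Finset.sum_eq_zero fun k hk => ?_, zero_add,
        pow_apply_pow_apply_of_mem_ker hDZ (hv N), Nat.descFactorial_self]
      · simp
      · rw [pow_apply_pow_apply_of_mem_ker hDZ (hv k),
          Nat.descFactorial_of_lt (Finset.mem_range.mp hk), zero_smul]
    have hvN : v N = 0 := by
      rw [hsum, map_zero, ← Nat.cast_smul_eq_nsmul R] at hDN
      exact (hN N N.lt_succ_self).smul_eq_zero.mp hDN.symm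
    rw [Finset.sum_range_succ, hvN, map_zero, add_zero] at hsum
    intro k hk
    rcases Nat.lt_succ_iff_lt_or_eq.mp hk with hk | rfl
    · exact ih (fun j hj => hN j (by omega)) hsum k hk
    · exact hvN

lemma nonempty_pi_linearEquiv_of_pow_eq_zero (hDZ : D * Z = Z * D + 1) (hDN : D ^ N = 0)
    (hKD : ∀ v ∈ K, D v ∈ K) (hKZ : ∀ v ∈ K, Z v ∈ K) (hN : ∀ k < N, IsUnit (k.factorial : R)) :
    Nonempty ((Fin N → ↥(ker D ⊓ K)) ≃ₗ[R] K) := by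
  let F : (Fin N → ↥(ker D ⊓ K)) →ₗ[R] K :=
    (∑ k : Fin N, (Z ^ (k : ℕ)) ∘ₗ (ker D ⊓ K).subtype ∘ₗ LinearMap.proj k).codRestrict K
      fun v => by
        simpa using sum_mem fun k _ =>
          Module.End.pow_apply_mem_of_forall_mem _ hKZ _ (v k).2.2
  have hF : ∀ v : ℕ → ↥(ker D ⊓ K),
      (F fun k => v k : M) = ∑ k ∈ Finset.range N, (Z ^ k) (v k) := fun v => by
    simp [F, Finset.sum_range]
  refine ⟨LinearEquiv.ofBijective F ⟨?_, fun a => ?_⟩⟩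
  · refine (injective_iff_map_eq_zero F).mpr fun v hv => ?_
    let v' : ℕ → ↥(ker D ⊓ K) := fun k => if hk : k < N then v ⟨k, hk⟩ else 0
    have hv' : (fun k : Fin N => v' k) = v := by ext k; simp [v']
    have hzero := eq_zero_of_sum_pow_apply_eq_zero (v := fun k => (v' k : M)) hDZ hN
      (fun k => (v' k).2.1) (by rw [← hF, hv', hv, Submodule.coe_zero])
    ext k
    rw [← hv']
    exact hzero k k.2
  · obtain ⟨v, hvK, hv⟩ := exists_eq_sum_pow_apply_of_pow_apply_eq_zero hDZ hKD hKZ hN a.2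
      (by simp [hDN])
    exact ⟨fun k => ⟨v k, hvK k⟩, Subtype.ext ((hF fun k => ⟨v k, hvK k⟩).trans hv.symm)⟩

end PowerDecomposition

section FreeFactor

variable {R : Type*} [CommRing R] [IsLocalRing R] {L K : Type*} [AddCommGroup L] [Module R L]
  [AddCommGroup K] [Module R K] {N : ℕ}

lemma free_finite_finrank_of_pi_linearEquiv (hN : 0 < N) (e : (Fin N → L) ≃ₗ[R] K)
    [Module.Free R K] [Module.Finite R K] :
    Module.Free R L ∧ Module.Finite R L ∧ finrank R K = N * finrank R L := by
  have : NeZero N := ⟨hN.ne'⟩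
  let i : L →ₗ[R] K := e.toLinearMap ∘ₗ LinearMap.single R (fun _ => L) 0
  let r : K →ₗ[R] L := LinearMap.proj 0 ∘ₗ e.symm.toLinearMap
  have hri : r ∘ₗ i = LinearMap.id := by ext; simp [r, i]
  have hfin : Module.Finite R L :=
    Module.Finite.of_surjective r (LinearMap.surjective_of_comp_eq_id _ _ hri)
  have : Module.Projective R L := Module.Projective.of_split i r hri
  have hfree : Module.Free R L := Module.free_of_flat_of_isLocalRing
  refine ⟨hfree, hfin, ?_⟩
  rw [← e.finrank_eq, Module.finrank_pi_fintype]
  simp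

end FreeFactor

/-- A family of canonical pairs of operators `D s`, `Z s` on a module, as the derivations and the
multiplications by the coordinates of a truncated polynomial algebra. The operators `Z s` are not
required to commute with each other. -/
structure IsWeylSystem {R M ι : Type*} [CommRing R] [AddCommGroup M] [Module R M] [DecidableEq ι]
    (N : ℕ) (D Z : ι → Module.End R M) : Prop where
  commute (s t : ι) : Commute (D s) (D t)
  mul_eq (s t : ι) : D s * Z t = Z t * D s + if s = t then 1 else 0
  pow_eq_zero (s : ι) : D s ^ N = 0

namespace IsWeylSystem

variable {R M ι : Type*} [CommRing R] [AddCommGroup M] [Module R M] [DecidableEq ι]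
  {N : ℕ} {D Z : ι → Module.End R M}

lemma apply_mem_inf_ker (hDZ : IsWeylSystem N D Z) (S : Finset ι) (t : ι) :
    ∀ v ∈ S.inf fun s => ker (D s), D t v ∈ S.inf fun s => ker (D s) := by
  simp only [Submodule.mem_finsetInf, LinearMap.mem_ker]
  intro v hv s hs
  rw [← Module.End.mul_apply, (hDZ.commute s t).eq, Module.End.mul_apply, hv s hs, map_zero]

lemma apply_mem_inf_ker_of_notMem (hDZ : IsWeylSystem N D Z) {S : Finset ι} {t : ι} (ht : t ∉ S) :
    ∀ v ∈ S.inf fun s => ker (D s), Z t v ∈ S.inf fun s => ker (D s) := by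
  simp only [Submodule.mem_finsetInf, LinearMap.mem_ker]
  intro v hv s hs
  rw [← Module.End.mul_apply, hDZ.mul_eq, if_neg (ne_of_mem_of_not_mem hs ht), add_zero,
    Module.End.mul_apply, hv s hs, map_zero]

lemma mul_self_eq (hDZ : IsWeylSystem N D Z) (s : ι) : D s * Z s = Z s * D s + 1 := by
  simpa using hDZ.mul_eq s s

lemma eq_top_of_inf_ker_le [Fintype ι] (hDZ : IsWeylSystem N D Z)
    (hN : ∀ k < N, IsUnit (k.factorial : R)) {J : Submodule R M} (hZJ : ∀ t, ∀ v ∈ J, Z t v ∈ J)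
    (hJ : (Finset.univ.inf fun s => ker (D s)) ≤ J) : J = ⊤ := by
  suffices H : ∀ S : Finset ι, (S.inf fun s => ker (D s)) ≤ J → J = ⊤ from H _ hJ
  intro S
  induction S using Finset.induction_on with
  | empty => simp
  | insert t S ht ih =>
    rw [Finset.inf_insert]
    refine fun hle => ih fun a ha => ?_
    obtain ⟨v, hv, rfl⟩ := exists_eq_sum_pow_apply_of_pow_apply_eq_zero (hDZ.mul_self_eq t)
      (hDZ.apply_mem_inf_ker S t) (hDZ.apply_mem_inf_ker_of_notMem ht) hN ha
      (by simp [hDZ.pow_eq_zero])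
    exact sum_mem fun k _ => Module.End.pow_apply_mem_of_forall_mem _ (hZJ t) _ (hle (hv k))

lemma free_finite_finrank_inf_ker [IsLocalRing R] [Module.Free R M] [Module.Finite R M]
    (hDZ : IsWeylSystem N D Z) (hN0 : 0 < N) (hN : ∀ k < N, IsUnit (k.factorial : R))
    (S : Finset ι) :
    Module.Free R ↥(S.inf fun s => ker (D s)) ∧ Module.Finite R ↥(S.inf fun s => ker (D s)) ∧
      finrank R M = N ^ S.card * finrank R ↥(S.inf fun s => ker (D s)) := by
  induction S using Finset.induction_on with
  | empty =>
    rw [Finset.inf_empty]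
    exact ⟨Module.Free.of_equiv Submodule.topEquiv.symm, inferInstance, by simp⟩
  | insert t S ht ih =>
    obtain ⟨_, _, hrank⟩ := ih
    obtain ⟨e⟩ := nonempty_pi_linearEquiv_of_pow_eq_zero (hDZ.mul_self_eq t) (hDZ.pow_eq_zero t)
      (hDZ.apply_mem_inf_ker S t) (hDZ.apply_mem_inf_ker_of_notMem ht) hN
    rw [Finset.inf_insert]
    obtain ⟨hfree, hfinite, hstep⟩ := free_finite_finrank_of_pi_linearEquiv hN0 e
    refine ⟨hfree, hfinite, ?_⟩
    rw [hrank, hstep, Finset.card_insert_of_notMem ht, pow_succ, mul_assoc]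

lemma exists_inf_ker_eq_span_singleton [IsLocalRing R] [Fintype ι] [Module.Free R M]
    [Module.Finite R M] (hDZ : IsWeylSystem N D Z) (hN0 : 0 < N)
    (hN : ∀ k < N, IsUnit (k.factorial : R)) (hrank : finrank R M = N ^ Fintype.card ι) :
    ∃ v : M, (Finset.univ.inf fun s => ker (D s)) = Submodule.span R {v} := by
  obtain ⟨_, _, hmul⟩ := hDZ.free_finite_finrank_inf_ker hN0 hN Finset.univ
  rw [hrank, Finset.card_univ, left_eq_mul₀ (pow_ne_zero _ hN0.ne')] at hmul
  set L := Finset.univ.inf fun s => ker (D s)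
  obtain ⟨v, -, hv⟩ := finrank_eq_one_iff'.mp hmul
  refine ⟨v, le_antisymm (fun w hw => ?_) ?_⟩
  · obtain ⟨c, hc⟩ := hv ⟨w, hw⟩
    exact Submodule.mem_span_singleton.mpr ⟨c, congrArg Subtype.val hc⟩
  · simp

end IsWeylSystem

section TwistedCommutator

lemma exists_smul_eq_of_isSMulRegular {R M M' : Type*} [CommSemiring R] [AddCommMonoid M]
    [Module R M] [AddCommMonoid M'] [Module R M'] {h : R} (hreg : IsSMulRegular M' h)
    {f : M →ₗ[R] M'} (hf : ∀ m, ∃ w, f m = h • w) : ∃ g : M →ₗ[R] M', h • g = f := by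
  choose g hg using hf
  refine ⟨{ toFun := g, map_add' := fun a b => hreg ?_, map_smul' := fun r a => hreg ?_ }, ?_⟩
  · simp only [smul_add, ← hg, map_add]
  · simp only [RingHom.id_apply, smul_comm h r, ← hg, map_smul]
  · ext m
    exact (hg m).symm

lemma map_mul_eq_mul_of_adjoin_eq_top {R A : Type*} [CommSemiring R] [Semiring A] [Algebra R A]
    {S : Set A} (hS : Algebra.adjoin R S = ⊤) (φ : A →ₐ[R] A) {v : A}
    (hv : ∀ z ∈ S, φ z * v = v * z) (m : A) : φ m * v = v * m := by
  have hm : m ∈ Algebra.adjoin R S := hS ▸ Algebra.mem_top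
  induction hm using Algebra.adjoin_induction with
  | mem z hz => exact hv z hz
  | algebraMap r => rw [AlgHom.commutes, Algebra.commutes]
  | add a b _ _ ha hb => rw [map_add, add_mul, ha, hb, mul_add]
  | mul a b _ _ ha hb => rw [map_mul, mul_assoc, hb, ← mul_assoc, ha, mul_assoc]

variable {R A : Type*} [CommRing R] [Ring A] [Algebra R A] {h : R}

lemma natCast_eq_zero_of_algebra {p : ℕ} (hpR : (p : R) = 0) : (p : A) = 0 := by
  rw [← map_natCast (algebraMap R A), hpR, map_zero]

lemma add_pow_eq_zero_of_commute {p : ℕ} (hp : p.Prime) (hpA : (p : A) = 0) {a b : A}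
    (hab : Commute a b) (ha : a ^ p = 0) (hb : b ^ p = 0) : (a + b) ^ p = 0 := by
  rw [hab.add_pow_prime_eq hp, ha, hb, hpA]
  simp

lemma sub_pow_eq_zero_of_commute {p : ℕ} (hp : p.Prime) (hpA : (p : A) = 0) {a b : A}
    (hab : Commute a b) (ha : a ^ p = 0) (hb : b ^ p = 0) : (a - b) ^ p = 0 := by
  rw [sub_eq_add_neg]
  exact add_pow_eq_zero_of_commute hp hpA hab.neg_right ha (by rw [neg_pow, hb, mul_zero])

lemma exists_mul_sub_mul_eq_smul_of_adjoin_eq_top {S : Set A} (hS : Algebra.adjoin R S = ⊤)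
    {x : A} (hx : ∀ z ∈ S, ∃ w, x * z - z * x = h • w) (u : A) :
    ∃ w, x * u - u * x = h • w := by
  have hu : u ∈ Algebra.adjoin R S := hS ▸ Algebra.mem_top
  induction hu using Algebra.adjoin_induction with
  | mem z hz => exact hx z hz
  | algebraMap r => exact ⟨0, by rw [Algebra.commutes, sub_self, smul_zero]⟩
  | add u v _ _ hu hv =>
    obtain ⟨⟨w, hw⟩, w', hw'⟩ := hu, hv
    exact ⟨w + w', by rw [smul_add, ← hw, ← hw']; noncomm_ring⟩
  | mul u v _ _ hu hv =>
    obtain ⟨⟨w, hw⟩, w', hw'⟩ := hu, hv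
    exact ⟨w * v + u * w', by
      rw [smul_add, ← smul_mul_assoc, ← mul_smul_comm, ← hw, ← hw']; noncomm_ring⟩

lemma isUnit_of_mul_eq_one_of_finite [Module.Finite R A] {v w : A} (hvw : v * w = 1) :
    IsUnit v := by
  have hsurj : Function.Surjective (LinearMap.mulLeft R v) := fun a =>
    ⟨w * a, by rw [LinearMap.mulLeft_apply, ← mul_assoc, hvw, one_mul]⟩
  have hinj := OrzechProperty.injective_of_surjective_endomorphism _ hsurj
  have hwv : w * v = 1 := hinj (by
    rw [LinearMap.mulLeft_apply, LinearMap.mulLeft_apply, ← mul_assoc, hvw, one_mul, mul_one])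
  exact ⟨⟨v, w, hvw, hwv⟩, rfl⟩

variable {ι : Type*} [DecidableEq ι] {p : ℕ}

lemma isWeylSystem_of_smul_eq_mulLeft_sub_mulRight (hp : p.Prime) (hpR : (p : R) = 0)
    (hreg : IsSMulRegular A h) {D : ι → Module.End R A} {a b b' : ι → A} {c : ι → ι → R}
    (hD : ∀ s, h • D s = LinearMap.mulLeft R (a s) - LinearMap.mulRight R (b s))
    (ha : ∀ s t, a s * a t - a t * a s = algebraMap R A (c s t))
    (hb : ∀ s t, b s * b t - b t * b s = algebraMap R A (c s t))
    (hap : ∀ s, a s ^ p = 0) (hbp : ∀ s, b s ^ p = 0)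
    (hbb' : ∀ s t, b s * b' t - b' t * b s = if s = t then algebraMap R A h else 0) :
    IsWeylSystem p D fun t => LinearMap.mulRight R (b' t) := by
  have hD' : ∀ s u, h • D s u = a s * u - u * b s := fun s u => congr($(hD s) u)
  refine ⟨fun s t => ?_, fun s t => ?_, fun s => ?_⟩
  · have hcomp : ∀ s t u, h • h • (D s * D t) u =
        a s * (a t * u - u * b t) - (a t * u - u * b t) * b s := fun s t u => by
      rw [← hD' t, mul_smul_comm, smul_mul_assoc, ← smul_sub, ← hD', Module.End.mul_apply]
    refine LinearMap.ext fun u => hreg (hreg (sub_eq_zero.mp ?_))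
    calc h • h • (D s * D t) u - h • h • (D t * D s) u
        = (a s * a t - a t * a s) * u - u * (b s * b t - b t * b s) := by
          rw [hcomp, hcomp]; noncomm_ring
      _ = 0 := by rw [ha, hb, Algebra.commutes, sub_self]
  · refine LinearMap.ext fun u => hreg (sub_eq_zero.mp ?_)
    have hscalar : u * (if s = t then algebraMap R A h else 0) =
        h • (if s = t then (1 : Module.End R A) else 0) u := by
      split_ifs
      · rw [← Algebra.commutes, Algebra.smul_def, Module.End.one_apply]
      · simp
    calc h • D s (u * b' t) - h • (D s u * b' t + (if s = t then (1 : Module.End R A) else 0) u)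
        = a s * (u * b' t) - u * b' t * b s - ((a s * u - u * b s) * b' t +
            u * (b s * b' t - b' t * b s)) := by
          rw [smul_add, ← smul_mul_assoc, hD', hD', hbb', hscalar]
      _ = 0 := by noncomm_ring
  · have hpow : h ^ p • D s ^ p = 0 := by
      rw [← smul_pow, hD]
      refine sub_pow_eq_zero_of_commute hp (natCast_eq_zero_of_algebra hpR)
        (LinearMap.commute_mulLeft_right (a s) (b s)) ?_ ?_
      · rw [LinearMap.pow_mulLeft, hap, LinearMap.mulLeft_zero_eq_zero]
      · rw [LinearMap.pow_mulRight, hbp, LinearMap.mulRight_zero_eq_zero]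
    refine LinearMap.ext fun u => hreg.pow p ?_
    simpa using congr($hpow u)

end TwistedCommutator

section Conjugation

variable {R A ι : Type*} [CommRing R] [Ring A] [Algebra R A] {h : R}

lemma exists_mul_sub_mul_eq_smul_of_sub_eq_smul {S : Set A} (hS : Algebra.adjoin R S = ⊤)
    {x x' : A} (hx : ∀ z ∈ S, ∃ w, x * z - z * x = h • w) (hx' : ∃ w, x' - x = h • w) (u : A) :
    ∃ w, x' * u - u * x = h • w := by
  obtain ⟨w, hw⟩ := hx'
  obtain ⟨w', hw'⟩ := exists_mul_sub_mul_eq_smul_of_adjoin_eq_top hS hx u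
  refine ⟨w * u + w', ?_⟩
  rw [smul_add, ← smul_mul_assoc, ← hw, ← hw']
  noncomm_ring

lemma IsWeylSystem.exists_unit_inf_ker_eq_span_singleton [IsLocalRing R] [Module.Free R A]
    [Module.Finite R A] [Fintype ι] [DecidableEq ι] {N : ℕ} {D : ι → Module.End R A} {z' : ι → A}
    (hD : IsWeylSystem N D fun t => LinearMap.mulRight R (z' t)) (hN0 : 0 < N)
    (hN : ∀ k < N, IsUnit (k.factorial : R)) (hrank : finrank R A = N ^ Fintype.card ι) :
    ∃ u : Aˣ, (Finset.univ.inf fun s => ker (D s)) = Submodule.span R {(u : A)} := by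
  obtain ⟨v, hv⟩ := hD.exists_inf_ker_eq_span_singleton hN0 hN hrank
  have htop : LinearMap.range (LinearMap.mulLeft R v) = ⊤ := by
    refine hD.eq_top_of_inf_ker_le hN ?_ ?_
    · rintro t _ ⟨w, rfl⟩
      exact ⟨w * z' t, (mul_assoc v w (z' t)).symm⟩
    · rw [hv, Submodule.span_singleton_le_iff_mem]
      exact ⟨1, mul_one v⟩
  obtain ⟨w, hw⟩ := LinearMap.range_eq_top.mp htop 1
  obtain ⟨u, rfl⟩ := isUnit_of_mul_eq_one_of_finite (R := R) hw
  exact ⟨u, hv⟩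

theorem exists_unit_algHom_apply_eq_conj [IsLocalRing R] [Module.Free R A] [Module.Finite R A]
    [Fintype ι] [DecidableEq ι] {p : ℕ} {z z' : ι → A} (hp : p.Prime) (hpR : (p : R) = 0)
    (hnz : h ∈ nonZeroDivisors R) (hrank : finrank R A = p ^ Fintype.card ι)
    (hadj : Algebra.adjoin R (Set.range z) = ⊤) (hpow : ∀ s, z s ^ p = 0)
    (hzz : ∀ s t, ∃ c : R, z s * z t - z t * z s = h • algebraMap R A c)
    (hzz' : ∀ s t, z s * z' t - z' t * z s = if s = t then algebraMap R A h else 0)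
    (φ : A →ₐ[R] A) (hφ : ∀ a, ∃ w, φ a - a = h • w) :
    ∃ u : Aˣ, ∀ m, φ m = u * m * (u⁻¹ : Aˣ) := by
  have hreg : IsSMulRegular A h := Module.Flat.isSMulRegular_of_nonZeroDivisors hnz
  choose c hzz using hzz
  choose D hD using fun s => exists_smul_eq_of_isSMulRegular hreg
    (f := LinearMap.mulLeft R (φ (z s)) - LinearMap.mulRight R (z s))
    (exists_mul_sub_mul_eq_smul_of_sub_eq_smul hadj
      (by rintro _ ⟨t, rfl⟩; exact ⟨_, hzz s t⟩) (hφ (z s)))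
  have hW : IsWeylSystem p D fun t => LinearMap.mulRight R (z' t) :=
    isWeylSystem_of_smul_eq_mulLeft_sub_mulRight (c := fun s t => h * c s t) hp hpR hreg hD
      (fun s t => by
        rw [← map_mul, ← map_mul, ← map_sub, hzz, map_smul, AlgHom.commutes, map_mul,
          Algebra.smul_def])
      (fun s t => by rw [hzz, map_mul, Algebra.smul_def])
      (fun s => by rw [← map_pow, hpow, map_zero]) hpow hzz'
  have hfact : ∀ k < p, IsUnit (k.factorial : R) := fun k hk => by
    have := Fact.mk hp
    exact IsUnit.natCast_factorial_of_isNilpotent (hpR ▸ IsNilpotent.zero) hk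
  obtain ⟨u, hu⟩ := hW.exists_unit_inf_ker_eq_span_singleton hp.pos hfact hrank
  have hker : ∀ s, D s u = 0 := by
    simpa [Submodule.mem_finsetInf] using hu.ge (Submodule.mem_span_singleton_self (u : A))
  have hφz : ∀ s, φ (z s) * u = u * z s := fun s => by
    simpa [hker, sub_eq_zero] using congr($(hD s) (u : A)).symm
  refine ⟨u, fun m => (Units.eq_mul_inv_iff_mul_eq u).mpr ?_⟩
  exact map_mul_eq_mul_of_adjoin_eq_top hadj φ (by rintro _ ⟨s, rfl⟩; exact hφz s) m

end Conjugation

section WeylRelations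

variable {R A ι : Type*} [CommRing R] [Ring A] [Algebra R A] [DecidableEq ι] {h : R} {x y : ι → A}

lemma exists_sumElim_commutator_eq_smul (hxx : ∀ i j, x i * x j = x j * x i)
    (hyy : ∀ i j, y i * y j = y j * y i)
    (hyx : ∀ i j, y j * x i = x i * y j + if i = j then algebraMap R A h else 0) (s t : ι ⊕ ι) :
    ∃ c : R, Sum.elim x y s * Sum.elim x y t - Sum.elim x y t * Sum.elim x y s =
      h • algebraMap R A c := by
  rcases s with i | j <;> rcases t with k | l <;> simp only [Sum.elim_inl, Sum.elim_inr]
  · exact ⟨0, by rw [hxx, sub_self, map_zero, smul_zero]⟩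
  · refine ⟨if i = l then -1 else 0, ?_⟩
    rw [hyx]
    split_ifs <;> simp [Algebra.algebraMap_eq_smul_one]
  · refine ⟨if k = j then 1 else 0, ?_⟩
    rw [hyx]
    split_ifs <;> simp [Algebra.algebraMap_eq_smul_one]
  · exact ⟨0, by rw [hyy, sub_self, map_zero, smul_zero]⟩

lemma sumElim_commutator_sumElim_neg (hxx : ∀ i j, x i * x j = x j * x i)
    (hyy : ∀ i j, y i * y j = y j * y i)
    (hyx : ∀ i j, y j * x i = x i * y j + if i = j then algebraMap R A h else 0) (s t : ι ⊕ ι) :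
    Sum.elim x y s * Sum.elim (-y) x t - Sum.elim (-y) x t * Sum.elim x y s =
      if s = t then algebraMap R A h else 0 := by
  rcases s with i | j <;> rcases t with k | l <;>
    simp only [Sum.elim_inl, Sum.elim_inr, Sum.inl.injEq, Sum.inr.injEq, reduceCtorEq, if_false,
      Pi.neg_apply]
  · rw [neg_mul, mul_neg, hyx]
    abel
  · rw [hxx, sub_self]
  · rw [neg_mul, mul_neg, hyy, sub_self]
  · rw [hyx, add_sub_cancel_left]
    simp only [eq_comm]

end WeylRelations

section TruncatedPolynomials

open MvPolynomial

lemma prod_univ_X_pow_eq_monomial {σ R : Type*} [CommSemiring R] [Fintype σ] (m : σ → ℕ) :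
    ∏ s, (X s : MvPolynomial σ R) ^ m s = monomial (Finsupp.equivFunOnFinite.symm m) 1 := by
  rw [monomial_eq, C_1, one_mul, Finsupp.prod_fintype _ _ fun s => pow_zero _]
  rfl

lemma commute_mulLeft {R C : Type*} [CommSemiring R] [CommSemiring C] [Algebra R C] (a b : C) :
    Commute (LinearMap.mulLeft R a) (LinearMap.mulLeft R b) :=
  (Commute.all a b).map (Algebra.lmul R C)

lemma eq_zero_of_apply_one_of_commute_mulLeft {R C : Type*} [CommRing R] [CommRing C]
    [Algebra R C] {S : Set C} (hS : Algebra.adjoin R S = ⊤) {T : Module.End R C} (hT1 : T 1 = 0)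
    (hT : ∀ z ∈ S, Commute T (LinearMap.mulLeft R z)) : T = 0 := by
  have hcomm : ∀ c ∈ Algebra.adjoin R S, ∀ q, T (c * q) = c * T q := by
    intro c hc
    induction hc using Algebra.adjoin_induction with
    | mem z hz => exact fun q => congr($((hT z hz).eq) q)
    | algebraMap r => simp [← Algebra.smul_def]
    | add a b _ _ ha hb => simp [add_mul, ha, hb]
    | mul a b _ _ ha hb => simp [mul_assoc, ha, hb]
  refine LinearMap.ext fun c => ?_
  have := hcomm c (hS ▸ Algebra.mem_top) 1
  rwa [mul_one, hT1, mul_zero] at this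

variable {σ R : Type*} [CommRing R] {N : ℕ}

variable (σ R N) in
/-- The ideal of `R[X_s : s ∈ σ]` generated by the powers `X_s ^ N`. -/
def truncIdeal : Ideal (MvPolynomial σ R) :=
  Ideal.span (Set.range fun s => X s ^ N)

variable (σ R N) in
/-- The truncated polynomial algebra `R[X_s : s ∈ σ] / (X_s ^ N : s ∈ σ)`. -/
abbrev TruncPolynomial : Type _ :=
  MvPolynomial σ R ⧸ truncIdeal σ R N

namespace TruncPolynomial

variable (σ R N) in
/-- The projection of the polynomial ring onto the truncated polynomial algebra. -/
def mk : MvPolynomial σ R →ₐ[R] TruncPolynomial σ R N :=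
  Ideal.Quotient.mkₐ R (truncIdeal σ R N)

lemma mk_surjective : Function.Surjective (mk σ R N) :=
  Ideal.Quotient.mkₐ_surjective R _

lemma mk_eq_zero_iff_mem {f : MvPolynomial σ R} : mk σ R N f = 0 ↔ f ∈ truncIdeal σ R N :=
  Ideal.Quotient.eq_zero_iff_mem

lemma mk_eq_zero_iff {f : MvPolynomial σ R} :
    mk σ R N f = 0 ↔ ∀ m ∈ f.support, ∃ s, N ≤ m s := by
  have hspan : truncIdeal σ R N = Ideal.span ((fun m => monomial m (1 : R)) ''
      (Set.range fun s => Finsupp.single s N)) := by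
    simp only [truncIdeal, X_pow_eq_monomial, ← Set.range_comp, Function.comp_def]
  rw [mk_eq_zero_iff_mem, hspan, mem_ideal_span_monomial_image]
  simp only [Set.exists_range_iff, Finsupp.single_le_iff]

lemma mk_X_pow (s : σ) : mk σ R N (X s) ^ N = 0 := by
  rw [← map_pow, mk_eq_zero_iff_mem]
  exact Ideal.subset_span ⟨s, rfl⟩

lemma adjoin_range_mk_X : Algebra.adjoin R (Set.range fun s => mk σ R N (X s)) = ⊤ := by
  rw [← (AlgHom.range_eq_top _).mpr mk_surjective, ← Algebra.map_top, ← adjoin_range_X,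
    AlgHom.map_adjoin, ← Set.range_comp, Function.comp_def]

lemma linearIndependent_mk_prod_X_pow [Fintype σ] :
    LinearIndependent R fun m : σ → Fin N => mk σ R N (∏ s, X s ^ (m s : ℕ)) := by
  classical
  refine Fintype.linearIndependent_iff.mpr fun g hg m => ?_
  by_contra hgm
  simp only [prod_univ_X_pow_eq_monomial, ← map_smul, ← map_sum, smul_eq_mul,
    mul_one] at hg
  have hinj : ∀ m' : σ → Fin N, (Finsupp.equivFunOnFinite.symm fun s => (m' s : ℕ)) =
      Finsupp.equivFunOnFinite.symm (fun s => (m s : ℕ)) ↔ m' = m := fun m' => by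
    simp [_root_.funext_iff, Fin.ext_iff]
  obtain ⟨s, hs⟩ := mk_eq_zero_iff.mp hg (Finsupp.equivFunOnFinite.symm fun s => (m s : ℕ)) (by
    simpa [coeff_sum, coeff_monomial, hinj] using hgm)
  exact absurd (m s).2 (not_lt.mpr hs)

lemma pderiv_mem_truncIdeal (hNR : (N : R) = 0) (s : σ) {f : MvPolynomial σ R}
    (hf : f ∈ truncIdeal σ R N) : pderiv s f ∈ truncIdeal σ R N := by
  induction hf using Submodule.span_induction with
  | mem f hf =>
    obtain ⟨t, rfl⟩ := hf
    simp [Derivation.leibniz_pow, natCast_eq_zero_of_algebra hNR]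
  | zero => simp
  | add f g _ _ hf hg => rw [map_add]; exact add_mem hf hg
  | smul a f hf hdf =>
    rw [smul_eq_mul, Derivation.leibniz]
    exact add_mem (Ideal.mul_mem_left _ _ hdf) (Ideal.mul_mem_right _ _ hf)

/-- The derivation `∂/∂X_s` of the truncated polynomial algebra, which exists because
`∂(X_s ^ N)/∂X_s` is a multiple of `N = 0`. -/
def partialDeriv (hNR : (N : R) = 0) (s : σ) :
    Derivation R (TruncPolynomial σ R N) (TruncPolynomial σ R N) :=
  Derivation.liftOfSurjective (f := mk σ R N) mk_surjective (d := pderiv s) fun _ hf =>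
    mk_eq_zero_iff_mem.mpr (pderiv_mem_truncIdeal hNR s (mk_eq_zero_iff_mem.mp hf))

lemma partialDeriv_mk (hNR : (N : R) = 0) (s : σ) (f : MvPolynomial σ R) :
    partialDeriv hNR s (mk σ R N f) = mk σ R N (pderiv s f) :=
  Derivation.liftOfSurjective_apply mk_surjective (fun _ hf =>
    mk_eq_zero_iff_mem.mpr (pderiv_mem_truncIdeal hNR s (mk_eq_zero_iff_mem.mp hf))) f

lemma partialDeriv_mk_X [DecidableEq σ] (hNR : (N : R) = 0) (s t : σ) :
    partialDeriv hNR s (mk σ R N (X t)) = if s = t then 1 else 0 := by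
  rw [partialDeriv_mk, pderiv_X, Pi.single_apply, apply_ite (mk σ R N), map_one, map_zero]
  simp only [eq_comm]

lemma partialDeriv_comm (hNR : (N : R) = 0) (s t : σ) :
    Commute (partialDeriv hNR s).toLinearMap (partialDeriv hNR t).toLinearMap := by
  classical
  have hlie : ⁅partialDeriv hNR s, partialDeriv hNR t⁆ = 0 := by
    refine Derivation.ext_of_adjoin_eq_top _ adjoin_range_mk_X ?_
    rintro _ ⟨r, rfl⟩
    simp only [Derivation.commutator_apply, partialDeriv_mk_X]
    split_ifs <;> simp
  exact LinearMap.ext fun q => sub_eq_zero.mp congr($hlie q)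

lemma partialDeriv_mul_mulLeft_mk_X [DecidableEq σ] (hNR : (N : R) = 0) (s t : σ) :
    (partialDeriv hNR s).toLinearMap * LinearMap.mulLeft R (mk σ R N (X t)) =
      LinearMap.mulLeft R (mk σ R N (X t)) * (partialDeriv hNR s).toLinearMap +
        if s = t then 1 else 0 := by
  refine LinearMap.ext fun q => ?_
  have := (partialDeriv hNR s).leibniz (mk σ R N (X t)) q
  rw [partialDeriv_mk_X] at this
  split_ifs at this ⊢ <;> simpa using this

lemma partialDeriv_pow_eq_zero (hN : N ≠ 0) (hNR : (N : R) = 0) (s : σ) :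
    (partialDeriv hNR s).toLinearMap ^ N = 0 := by
  classical
  refine eq_zero_of_apply_one_of_commute_mulLeft adjoin_range_mk_X ?_ ?_
  · rw [← pow_sub_one_mul hN, Module.End.mul_apply]
    simp
  · rintro _ ⟨t, rfl⟩
    have hst := partialDeriv_mul_mulLeft_mk_X hNR s t
    by_cases h : s = t
    · rw [if_pos h] at hst
      have hpow := pow_succ_mul_of_mul_eq_mul_add_one hst N.pred
      rwa [← Nat.succ_eq_add_one, Nat.succ_pred_eq_of_ne_zero hN, ← Nat.cast_smul_eq_nsmul R, hNR,
        zero_smul, add_zero] at hpow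
    · rw [if_neg h, add_zero] at hst
      exact (show Commute _ _ from hst).pow_left N

end TruncPolynomial

end TruncatedPolynomials

section CommutingFamily

open MvPolynomial

variable {R A ι : Type*} [CommSemiring R] [Semiring A] [Algebra R A] {z : ι → A}

open scoped IsMulCommutative in
/-- Evaluation of polynomials at a family of commuting elements of a noncommutative algebra. -/
def commAeval (R : Type*) [CommSemiring R] [Algebra R A] (hz : ∀ i j, z i * z j = z j * z i) :
    MvPolynomial ι R →ₐ[R] A :=
  have := Algebra.isMulCommutative_adjoin R (s := Set.range z) (by
    rintro _ ⟨i, rfl⟩ _ ⟨j, rfl⟩; exact hz i j)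
  (Algebra.adjoin R (Set.range z)).val.comp
    (aeval fun i => ⟨z i, Algebra.subset_adjoin (Set.mem_range_self i)⟩)

@[simp]
lemma commAeval_X (hz : ∀ i j, z i * z j = z j * z i) (i : ι) : commAeval R hz (X i) = z i := by
  simp [commAeval]

lemma range_toLinearMap_eq_span_of_pow_eq_zero [Fintype ι] {N : ℕ} (F : MvPolynomial ι R →ₐ[R] A)
    (hF : ∀ i, F (X i) ^ N = 0) :
    LinearMap.range F.toLinearMap =
      Submodule.span R (Set.range fun m : ι → Fin N => F (∏ i, X i ^ (m i : ℕ))) := by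
  classical
  refine le_antisymm ?_ (Submodule.span_le.mpr ?_)
  · rw [LinearMap.range_eq_map, ← (basisMonomials ι R).span_eq, Submodule.map_span,
      Submodule.span_le]
    rintro _ ⟨_, ⟨m, rfl⟩, rfl⟩
    simp only [coe_basisMonomials, AlgHom.toLinearMap_apply]
    rw [← Finsupp.equivFunOnFinite.symm_apply_apply m,
      ← prod_univ_X_pow_eq_monomial]
    by_cases hm : ∀ i, m i < N
    · exact Submodule.subset_span ⟨fun i => ⟨m i, hm i⟩, rfl⟩
    · push Not at hm
      obtain ⟨i, hi⟩ := hm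
      rw [← Finset.mul_prod_erase _ _ (Finset.mem_univ i), map_mul, map_pow,
        Finsupp.equivFunOnFinite_apply, pow_eq_zero_of_le hi (hF i), zero_mul]
      exact zero_mem _
  · rintro _ ⟨m, rfl⟩
    exact ⟨_, rfl⟩

lemma eq_top_of_one_mem_of_mul_mem {S : Set A} (hS : Algebra.adjoin R S = ⊤) {J : Submodule R A}
    (h1 : 1 ∈ J) (hJ : ∀ z ∈ S, ∀ a ∈ J, z * a ∈ J) : J = ⊤ := by
  have hmul : ∀ b ∈ Algebra.adjoin R S, ∀ a ∈ J, b * a ∈ J := by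
    intro b hb
    induction hb using Algebra.adjoin_induction with
    | mem z hz => exact hJ z hz
    | algebraMap r =>
      intro a ha
      rw [← Algebra.smul_def]
      exact J.smul_mem r ha
    | add b c _ _ hb hc =>
      intro a ha
      rw [add_mul]
      exact add_mem (hb a ha) (hc a ha)
    | mul b c _ _ hb hc =>
      intro a ha
      rw [mul_assoc]
      exact hb _ (hc a ha)
  refine Submodule.eq_top_iff'.mpr fun a => ?_
  simpa using hmul a (hS ▸ Algebra.mem_top) 1 h1

lemma mul_commAeval_eq [DecidableEq ι] {h : R} {y : A} (hz : ∀ i j, z i * z j = z j * z i) {j : ι}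
    (hyz : ∀ i, y * z i = z i * y + if i = j then algebraMap R A h else 0) (f : MvPolynomial ι R) :
    y * commAeval R hz f = commAeval R hz f * y + h • commAeval R hz (pderiv j f) := by
  induction f using MvPolynomial.induction_on with
  | C r => simp [← algebraMap_eq, Algebra.commutes]
  | add f g hf hg => simp only [map_add, mul_add, add_mul, hf, hg, smul_add]; abel
  | mul_X f i hf =>
    have hscalar : (if i = j then algebraMap R A h else 0) =
        h • commAeval R hz (pderiv j (X i)) := by
      rw [pderiv_X, Pi.single_apply]
      split_ifs <;> simp [Algebra.smul_def]
    calc y * commAeval R hz (f * X i)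
        = (commAeval R hz f * y + h • commAeval R hz (pderiv j f)) * z i := by
          rw [map_mul, commAeval_X, ← mul_assoc, hf]
      _ = commAeval R hz f * (z i * y + h • commAeval R hz (pderiv j (X i))) +
            h • commAeval R hz (X i * pderiv j f) := by
          rw [add_mul, mul_assoc, hyz, hscalar, mul_comm (X i), map_mul, commAeval_X,
            smul_mul_assoc]
      _ = commAeval R hz (f * X i) * y + h • commAeval R hz (pderiv j (f * X i)) := by
          rw [Derivation.leibniz, smul_eq_mul, smul_eq_mul, map_add, map_mul _ f, map_mul _ f,
            commAeval_X, mul_add, mul_smul_comm, smul_add, mul_assoc, add_assoc]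

end CommutingFamily

section PBW

open MvPolynomial TruncPolynomial

variable {p n : ℕ} {R : Type} [CommRing R] {h : R}

lemma reesX_comm (i j : Fin n) :
    reesX p n R h i * reesX p n R h j = reesX p n R h j * reesX p n R h i := by
  simpa only [reesX, map_mul] using RingQuot.mkAlgHom_rel R (ReesWeylRel.xx (p := p) (h := h) i j)

lemma reesY_comm (i j : Fin n) :
    reesY p n R h i * reesY p n R h j = reesY p n R h j * reesY p n R h i := by
  simpa only [reesY, map_mul] using RingQuot.mkAlgHom_rel R (ReesWeylRel.yy (p := p) (h := h) i j)

lemma reesY_mul_reesX (i j : Fin n) :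
    reesY p n R h j * reesX p n R h i =
      reesX p n R h i * reesY p n R h j + if i = j then algebraMap R _ h else 0 := by
  simpa only [reesX, reesY, map_add, map_mul, apply_ite (RingQuot.mkAlgHom R _), AlgHom.commutes,
    map_zero] using RingQuot.mkAlgHom_rel R (ReesWeylRel.yx (p := p) (h := h) i j)

lemma reesX_pow (i : Fin n) : reesX p n R h i ^ p = 0 := by
  simpa only [reesX, map_pow, map_zero] using
    RingQuot.mkAlgHom_rel R (ReesWeylRel.xp (p := p) (h := h) i)

lemma reesY_pow (j : Fin n) : reesY p n R h j ^ p = 0 := by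
  simpa only [reesY, map_pow, map_zero] using
    RingQuot.mkAlgHom_rel R (ReesWeylRel.yp (p := p) (h := h) j)

variable (p n R h) in
/-- The generators `x_1, …, x_n, y_1, …, y_n` as a single family. -/
def reesGen : Fin n ⊕ Fin n → ReesWeyl p n R h :=
  Sum.elim (reesX p n R h) (reesY p n R h)

lemma adjoin_range_reesGen : Algebra.adjoin R (Set.range (reesGen p n R h)) = ⊤ := by
  have hgen : reesGen p n R h = RingQuot.mkAlgHom R (ReesWeylRel p n R h) ∘ FreeAlgebra.ι R := by
    funext s
    cases s <;> rfl
  rw [hgen, Set.range_comp, ← AlgHom.map_adjoin, FreeAlgebra.adjoin_range_ι, Algebra.map_top,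
    (AlgHom.range_eq_top _).mpr (RingQuot.mkAlgHom_surjective R _)]

/-- The operators by which the generators of `A(R)` act on the truncated polynomial algebra in
`2n` variables: `x_i` is multiplication by `X_i` and `y_j` is `Y_j + h ∂/∂X_j`. -/
def polyAction (hpR : (p : R) = 0) (h : R) :
    Fin n ⊕ Fin n → Module.End R (TruncPolynomial (Fin n ⊕ Fin n) R p) :=
  Sum.elim (fun i => LinearMap.mulLeft R (mk _ R p (X (Sum.inl i))))
    fun j => LinearMap.mulLeft R (mk _ R p (X (Sum.inr j))) +
      h • (partialDeriv hpR (Sum.inl j)).toLinearMap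

lemma commute_mulLeft_partialDeriv (hpR : (p : R) = 0) (i j : Fin n) :
    Commute (LinearMap.mulLeft R (mk (Fin n ⊕ Fin n) R p (X (Sum.inr i))))
      (h • (partialDeriv hpR (Sum.inl j)).toLinearMap) := by
  have hij := partialDeriv_mul_mulLeft_mk_X hpR (Sum.inl j) (Sum.inr i : Fin n ⊕ Fin n)
  rw [if_neg Sum.inl_ne_inr, add_zero] at hij
  exact (show Commute _ _ from hij).symm.smul_right h

lemma polyAction_inr_mul_inl (hpR : (p : R) = 0) (i j : Fin n) :
    polyAction hpR h (Sum.inr j) * polyAction hpR h (Sum.inl i) =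
      polyAction hpR h (Sum.inl i) * polyAction hpR h (Sum.inr j) +
        if i = j then algebraMap R _ h else 0 := by
  have hdiff := partialDeriv_mul_mulLeft_mk_X hpR (Sum.inl j) (Sum.inl i : Fin n ⊕ Fin n)
  simp only [polyAction, Sum.elim_inl, Sum.elim_inr]
  rw [add_mul, smul_mul_assoc, hdiff, (commute_mulLeft _ _).eq, mul_add, mul_smul_comm, smul_add,
    add_assoc]
  simp only [Sum.inl.injEq, eq_comm (a := i)]
  split_ifs <;> simp [Algebra.algebraMap_eq_smul_one]

lemma polyAction_rel (hp : p.Prime) (hpR : (p : R) = 0) ⦃a b : FreeAlgebra R (Fin n ⊕ Fin n)⦄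
    (hab : ReesWeylRel p n R h a b) :
    FreeAlgebra.lift R (polyAction hpR h) a = FreeAlgebra.lift R (polyAction hpR h) b := by
  cases hab with
  | xx i j =>
    simp only [map_mul, FreeAlgebra.lift_ι_apply]
    exact (commute_mulLeft _ _).eq
  | yy i j =>
    simp only [map_mul, FreeAlgebra.lift_ι_apply]
    exact ((commute_mulLeft _ _).add_right (commute_mulLeft_partialDeriv hpR i j)).add_left
      ((commute_mulLeft_partialDeriv hpR j i).symm.add_right
        (((partialDeriv_comm hpR _ _).smul_left h).smul_right h))
  | yx i j =>
    simp only [map_mul, map_add, FreeAlgebra.lift_ι_apply, polyAction_inr_mul_inl,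
      apply_ite (FreeAlgebra.lift R (polyAction hpR h)), AlgHom.commutes, map_zero]
  | xp i =>
    simp only [map_pow, FreeAlgebra.lift_ι_apply, map_zero]
    exact (LinearMap.pow_mulLeft _ _ _ _).trans (by rw [mk_X_pow, LinearMap.mulLeft_zero_eq_zero])
  | yp j =>
    simp only [map_pow, FreeAlgebra.lift_ι_apply, map_zero]
    refine add_pow_eq_zero_of_commute hp (natCast_eq_zero_of_algebra hpR)
      (commute_mulLeft_partialDeriv hpR j j) ?_ ?_
    · rw [LinearMap.pow_mulLeft, mk_X_pow, LinearMap.mulLeft_zero_eq_zero]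
    · rw [smul_pow, partialDeriv_pow_eq_zero hp.ne_zero, smul_zero]

/-- The representation of `A(R)` on truncated polynomials given by `polyAction`. -/
def polyRep (hp : p.Prime) (hpR : (p : R) = 0) (h : R) :
    ReesWeyl p n R h →ₐ[R] Module.End R (TruncPolynomial (Fin n ⊕ Fin n) R p) :=
  RingQuot.liftAlgHom R ⟨FreeAlgebra.lift R (polyAction hpR h), polyAction_rel hp hpR⟩

lemma polyRep_reesX (hp : p.Prime) (hpR : (p : R) = 0) (i : Fin n) :
    polyRep hp hpR h (reesX p n R h i) = LinearMap.mulLeft R (mk _ R p (X (Sum.inl i))) := by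
  rw [polyRep, reesX, RingQuot.liftAlgHom_mkAlgHom_apply, FreeAlgebra.lift_ι_apply]
  rfl

lemma polyRep_reesY (hp : p.Prime) (hpR : (p : R) = 0) (j : Fin n) :
    polyRep hp hpR h (reesY p n R h j) = LinearMap.mulLeft R (mk _ R p (X (Sum.inr j))) +
      h • (partialDeriv hpR (Sum.inl j)).toLinearMap := by
  rw [polyRep, reesY, RingQuot.liftAlgHom_mkAlgHom_apply, FreeAlgebra.lift_ι_apply]
  rfl

variable (p n R h) in
/-- Polynomials in the `x_i` as elements of `A(R)`. -/
def polyX : MvPolynomial (Fin n) R →ₐ[R] ReesWeyl p n R h :=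
  commAeval R reesX_comm

variable (p n R h) in
/-- Polynomials in the `y_j` as elements of `A(R)`. -/
def polyY : MvPolynomial (Fin n) R →ₐ[R] ReesWeyl p n R h :=
  commAeval R reesY_comm

lemma polyRep_polyX (hp : p.Prime) (hpR : (p : R) = 0) (f : MvPolynomial (Fin n) R) :
    polyRep hp hpR h (polyX p n R h f) = LinearMap.mulLeft R (mk _ R p (rename Sum.inl f)) := by
  have hhom : (polyRep hp hpR h).comp (polyX p n R h) =
      (Algebra.lmul R _).comp ((mk _ R p).comp (rename Sum.inl)) :=
    MvPolynomial.algHom_ext fun i => by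
      simp only [AlgHom.comp_apply, polyX, commAeval_X, rename_X]
      exact polyRep_reesX hp hpR i
  exact congr($hhom f)

lemma polyRep_polyY_apply_one (hp : p.Prime) (hpR : (p : R) = 0) (g : MvPolynomial (Fin n) R) :
    polyRep hp hpR h (polyY p n R h g) 1 = mk _ R p (rename Sum.inr g) := by
  induction g using MvPolynomial.induction_on with
  | C r => simp [← algebraMap_eq, Algebra.algebraMap_eq_smul_one]
  | add f g hf hg => simp only [map_add, LinearMap.add_apply, hf, hg]
  | mul_X g j hg =>
    have hderiv : pderiv (Sum.inl j) (rename Sum.inr g : MvPolynomial (Fin n ⊕ Fin n) R) = 0 := by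
      classical
      refine pderiv_eq_zero_of_notMem_vars fun hmem => ?_
      simpa using vars_rename Sum.inr g hmem
    rw [mul_comm, map_mul, map_mul, Module.End.mul_apply, hg, polyY, commAeval_X, polyRep_reesY,
      LinearMap.add_apply, LinearMap.smul_apply, Derivation.coeFn_coe, partialDeriv_mk, hderiv,
      map_zero, smul_zero, add_zero, LinearMap.mulLeft_apply, map_mul, rename_X, map_mul]

variable (p n R h) in
/-- The ordered monomial `∏ x_i ^ m(x_i) * ∏ y_j ^ m(y_j)` of `A(R)`. -/
def orderedMonomial (m : Fin n ⊕ Fin n → Fin p) : ReesWeyl p n R h :=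
  polyX p n R h (∏ i, X i ^ (m (Sum.inl i) : ℕ)) * polyY p n R h (∏ j, X j ^ (m (Sum.inr j) : ℕ))

lemma linearIndependent_orderedMonomial (hp : p.Prime) (hpR : (p : R) = 0) :
    LinearIndependent R (orderedMonomial p n R h) := by
  refine LinearIndependent.of_comp
    (LinearMap.applyₗ 1 ∘ₗ (polyRep hp hpR h).toLinearMap) ?_
  convert linearIndependent_mk_prod_X_pow (σ := Fin n ⊕ Fin n) (R := R) (N := p) using 2 with m
  simp [orderedMonomial, polyRep_polyX, polyRep_polyY_apply_one, Fintype.prod_sum_type]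

lemma range_polyX_mul_range_polyY :
    LinearMap.range (polyX p n R h).toLinearMap * LinearMap.range (polyY p n R h).toLinearMap =
      ⊤ := by
  refine eq_top_of_one_mem_of_mul_mem adjoin_range_reesGen ?_ ?_
  · rw [← mul_one 1]
    exact Submodule.mul_mem_mul ⟨1, map_one (polyX p n R h)⟩ ⟨1, map_one (polyY p n R h)⟩
  · rintro _ ⟨s, rfl⟩ a ha
    induction ha using Submodule.mul_induction_on' with
    | add a _ b _ ha hb =>
      rw [mul_add]
      exact add_mem ha hb
    | mem_mul_mem a ha b hb =>
      obtain ⟨f, rfl⟩ := ha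
      obtain ⟨g, rfl⟩ := hb
      rcases s with i | j
      · have hx : reesX p n R h i * (polyX p n R h f * polyY p n R h g) =
            polyX p n R h (X i * f) * polyY p n R h g := by
          rw [map_mul, polyX, commAeval_X, mul_assoc]
        exact hx ▸ Submodule.mul_mem_mul ⟨_, rfl⟩ ⟨_, rfl⟩
      · have hy : reesY p n R h j * (polyX p n R h f * polyY p n R h g) =
            polyX p n R h f * polyY p n R h (X j * g) +
              h • (polyX p n R h (pderiv j f) * polyY p n R h g) := by
          rw [← mul_assoc, polyX, mul_commAeval_eq _ (fun i => reesY_mul_reesX i j), add_mul,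
            mul_assoc, map_mul, polyY, commAeval_X, smul_mul_assoc]
        exact hy ▸ add_mem (Submodule.mul_mem_mul ⟨_, rfl⟩ ⟨_, rfl⟩)
          (Submodule.smul_mem _ h (Submodule.mul_mem_mul ⟨_, rfl⟩ ⟨_, rfl⟩))

lemma span_range_orderedMonomial :
    Submodule.span R (Set.range (orderedMonomial p n R h)) = ⊤ := by
  rw [eq_top_iff, ← range_polyX_mul_range_polyY,
    range_toLinearMap_eq_span_of_pow_eq_zero (N := p) (polyX p n R h)
      fun i => by rw [polyX, commAeval_X, reesX_pow],
    range_toLinearMap_eq_span_of_pow_eq_zero (N := p) (polyY p n R h)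
      fun j => by rw [polyY, commAeval_X, reesY_pow],
    Submodule.span_mul_span]
  refine Submodule.span_mono ?_
  rintro _ ⟨_, ⟨a, rfl⟩, _, ⟨b, rfl⟩, rfl⟩
  exact ⟨Sum.elim a b, rfl⟩

variable (n h) in
/-- The Poincaré–Birkhoff–Witt basis of `A(R)`. -/
def orderedMonomialBasis (hp : p.Prime) (hpR : (p : R) = 0) :
    Module.Basis (Fin n ⊕ Fin n → Fin p) R (ReesWeyl p n R h) :=
  Module.Basis.mk (linearIndependent_orderedMonomial hp hpR) span_range_orderedMonomial.ge

end PBW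

theorem automorphism_trivial_mod_h_is_inner_local_general
    {p n : ℕ} (hp : p.Prime) {R : Type} [CommRing R] [IsLocalRing R] (hpR : (p : R) = 0) {h : R}
    (hnz : h ∈ nonZeroDivisors R)
    (φ : ReesWeyl p n R h →ₐ[R] ReesWeyl p n R h)
    (hφ : ∀ a, ∃ c, φ a - a = algebraMap R (ReesWeyl p n R h) h * c) :
    ∃ u : (ReesWeyl p n R h)ˣ, ∀ m, φ m = u * m * (u⁻¹ : (ReesWeyl p n R h)ˣ) := by
  let B := orderedMonomialBasis n h hp hpR
  have : Module.Free R (ReesWeyl p n R h) := .of_basis B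
  have : Module.Finite R (ReesWeyl p n R h) := .of_basis B
  refine exists_unit_algHom_apply_eq_conj hp hpR hnz ?_ adjoin_range_reesGen ?_
    (exists_sumElim_commutator_eq_smul reesX_comm reesY_comm reesY_mul_reesX)
    (sumElim_commutator_sumElim_neg reesX_comm reesY_comm reesY_mul_reesX) φ fun a => ?_
  · rw [Module.finrank_eq_card_basis B, Fintype.card_fun, Fintype.card_fin]
  · rintro (i | j)
    · exact reesX_pow i
    · exact reesY_pow j
  · simpa only [Algebra.smul_def] using hφ a

/-- over a local `h`-separable base `R` (with `p·R = 0`, `p` an odd prime),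
every `R`-algebra automorphism of `A(R)` which is the identity modulo `h·A(R)` is inner. -/
theorem automorphism_trivial_mod_h_is_inner_local
    (p n : ℕ) (hp : p.Prime) (hodd : p ≠ 2) (hn : 1 ≤ n)
    (R : Type) [CommRing R] [IsLocalRing R] (hpR : (p : R) = 0) (h : R)
    (hnz : h ∈ nonZeroDivisors R)
    (hsep : ∀ a : R, (∃ b : R, a ^ p = h * b) → ∃ c : R, a ^ p = h ^ p * c)
    (φ : ReesWeyl p n R h ≃ₐ[R] ReesWeyl p n R h)
    (hφ : ∀ a : ReesWeyl p n R h, ∃ c : ReesWeyl p n R h,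
      φ a - a = algebraMap R (ReesWeyl p n R h) h * c) :
    ∃ u : (ReesWeyl p n R h)ˣ, ∀ m : ReesWeyl p n R h,
      φ m = (u : ReesWeyl p n R h) * m * ((u⁻¹ : (ReesWeyl p n R h)ˣ) : ReesWeyl p n R h) :=
  automorphism_trivial_mod_h_is_inner_local_general hp hpR hnz φ.toAlgHom hφ
end
end

section
/- Let p be an odd prime, n ≥ 1, and let R be a commutative ring with p·R = 0 and a distinguished element h ∈ R such that R is h-separable and R is h-adically complete (complete and separated with respect to the (h)-adic topology). Then every R-algebra automorphism φ of the Rees reduced Weyl algebra A(R) satisfying φ(a) ≡ a (mod h·A(R)) for all a ∈ A(R) is equal to conjugation by a unit of A(R). -/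
/-!
Let `w_1, …, w_{2n}` be the generators of `A(R)` and `z_1, …, z_{2n}` the dual family, so that
`[w_i, z_j] = δ_{ij} h`. Since `A(R)` is commutative modulo `h`, each twisted commutator
`m ↦ φ(w_j) m - m w_j` is divisible by `h`; let `D_j` be the quotient. Because `h` is a regular
element, the `D_j` commute, satisfy `D_j ^ p = 0`, and form with the right multiplications by the
`z_j` a Weyl algebra without `h`. Hence `u = (∏ D_j ^ (p - 1)) (∏ z_j ^ (p - 1))` is killed by
every `D_j`, which means `φ(w_j) u = u w_j`, and `u` is congruent to `((p - 1)!) ^ (2n)` modulo the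
left ideal generated by the `z_j`. These are nilpotent, so `u` is a unit modulo `h`, and therefore
a unit, as `A(R)` is a finite module and `h` lies in the Jacobson radical.

Finiteness, and regularity of `h` on `A(R)`, come from letting `A(R)` act on
`R[x, y] / (x_i ^ p, y_j ^ p)` through `x_i ↦ x_i` and `y_j ↦ y_j + h ∂/∂x_j`: acting on `1`
splits the surjection that sends a polynomial to its normally ordered value.
-/

noncomputable section

section PrimeCharacteristic

variable {p : ℕ}

theorem add_pow_prime_eq_zero_of_commute {E : Type*} [Semiring E] (hp : p.Prime)
    (hpE : (p : E) = 0) {a b : E} (hab : Commute a b) (ha : a ^ p = 0) (hb : b ^ p = 0) :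
    (a + b) ^ p = 0 := by
  obtain ⟨r, hr⟩ := hab.exists_add_pow_prime_eq hp
  simp [hr, ha, hb, hpE]

theorem isUnit_factorial_pred_of_prime {R : Type*} [CommRing R] (hp : p.Prime)
    (hpR : (p : R) = 0) : IsUnit ((p - 1).factorial : R) := by
  have hcoprime : IsCoprime (p : ℤ) ((p - 1).factorial : ℤ) :=
    (hp.coprime_factorial_of_lt (Nat.sub_one_lt hp.ne_zero)).isCoprime
  simpa [hpR, isCoprime_zero_left] using hcoprime.map (Int.castRingHom R)

end PrimeCharacteristic

section ListProducts

variable {M ι : Type*}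

theorem commute_list_prod_map_pow [Monoid M] {a : M} {δ : ι → M} {L : List ι}
    (h : ∀ i ∈ L, Commute a (δ i)) (m : ℕ) : Commute a (L.map fun i => δ i ^ m).prod :=
  Commute.list_prod_right _ _ fun _ hx => by
    obtain ⟨i, hi, rfl⟩ := List.mem_map.1 hx
    exact (h i hi).pow_right m

theorem mul_list_prod_map_pow_eq_zero [MonoidWithZero M] {δ : ι → M}
    (hδ : ∀ i j, Commute (δ i) (δ j)) {j : ι} {m : ℕ} (hj : δ j ^ (m + 1) = 0) {L : List ι}
    (hL : j ∈ L) : δ j * (L.map fun i => δ i ^ m).prod = 0 := by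
  obtain ⟨s, t, rfl⟩ := List.append_of_mem hL
  have hs := commute_list_prod_map_pow (fun i (_ : i ∈ s) => hδ j i) m
  simp only [List.map_append, List.prod_append, List.map_cons, List.prod_cons]
  rw [← mul_assoc, hs.eq, mul_assoc, ← mul_assoc (δ j), ← pow_succ', hj, zero_mul, mul_zero]

end ListProducts

section WeylPair

theorem pow_succ_mul_eq_of_mul_eq_add_one {E : Type*} [Semiring E] {δ z : E}
    (h : δ * z = z * δ + 1) (m : ℕ) :
    δ ^ (m + 1) * z = z * δ ^ (m + 1) + (m + 1 : ℕ) * δ ^ m := by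
  induction m with
  | zero => simpa using h
  | succ m ih =>
    rw [pow_succ' δ (m + 1), mul_assoc, ih, mul_add, ← mul_assoc δ z, h,
      ← mul_assoc δ, (Nat.cast_commute _ δ).symm.eq, mul_assoc, ← pow_succ' δ m]
    push_cast
    simp only [add_mul, one_mul, mul_assoc]
    abel

theorem exists_pow_mul_pow_eq_factorial_add {E : Type*} [Semiring E] {δ z : E}
    (h : δ * z = z * δ + 1) (m : ℕ) :
    ∃ e, δ ^ m * z ^ m = m.factorial + z * e := by
  induction m with
  | zero => exact ⟨0, by simp⟩
  | succ m ih =>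
    obtain ⟨e, he⟩ := ih
    refine ⟨δ ^ (m + 1) * z ^ m + (m + 1 : ℕ) * e, ?_⟩
    calc δ ^ (m + 1) * z ^ (m + 1)
        = z * (δ ^ (m + 1) * z ^ m) + (m + 1 : ℕ) * (δ ^ m * z ^ m) := by
          rw [pow_succ' z, ← mul_assoc, pow_succ_mul_eq_of_mul_eq_add_one h, add_mul,
            mul_assoc, mul_assoc]
      _ = (m + 1).factorial + z * (δ ^ (m + 1) * z ^ m + (m + 1 : ℕ) * e) := by
          rw [he, mul_add, mul_add z, ← mul_assoc _ z, (Nat.cast_commute (m + 1) z).eq,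
            mul_assoc z, Nat.factorial_succ]
          push_cast
          abel

theorem list_prod_pow_mul_prod_pow_sub_mem {E ι : Type*} [Ring E] [DecidableEq ι] {δ z : ι → E}
    (hδ : ∀ i j, Commute (δ i) (δ j))
    (hδz : ∀ i j, δ i * z j = z j * δ i + if i = j then 1 else 0)
    {K : AddSubgroup E} (hK : ∀ j e, z j * e ∈ K) (m : ℕ) {L : List ι} (hL : L.Nodup) :
    (L.map fun i => δ i ^ m).prod * (L.map fun i => z i ^ m).prod
      - (m.factorial : E) ^ L.length ∈ K := by
  induction L with
  | nil => simp
  | cons r L ih =>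
    obtain ⟨hr, hL⟩ := List.nodup_cons.1 hL
    simp only [List.map_cons, List.prod_cons, List.length_cons]
    set T := (L.map fun i => δ i ^ m).prod
    set V := (L.map fun i => z i ^ m).prod
    obtain ⟨e, he⟩ := exists_pow_mul_pow_eq_factorial_add
      (show δ r * z r = z r * δ r + 1 by simpa using hδz r r) m
    have hTδ : Commute (δ r ^ m) T :=
      (commute_list_prod_map_pow (fun i _ => hδ r i) m).pow_left m
    have hTz : Commute (z r) T := commute_list_prod_map_pow (fun i hi => by
      have hir : i ≠ r := fun h => hr (h ▸ hi)
      simpa [commute_iff_eq, hir] using (hδz i r).symm) m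
    have hexpand : δ r ^ m * T * (z r ^ m * V) = m.factorial * (T * V) + z r * (T * (e * V)) :=
      calc δ r ^ m * T * (z r ^ m * V) = T * (δ r ^ m * z r ^ m) * V := by
            rw [hTδ.eq]; simp only [mul_assoc]
        _ = T * m.factorial * V + T * z r * e * V := by rw [he]; noncomm_ring
        _ = m.factorial * (T * V) + z r * (T * (e * V)) := by
            rw [← hTz.eq, ← (Nat.cast_commute _ T).eq]; simp only [mul_assoc]
    have hsub : δ r ^ m * T * (z r ^ m * V) - (m.factorial : E) ^ (L.length + 1)
        = m.factorial • (T * V - (m.factorial : E) ^ L.length) + z r * (T * (e * V)) := by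
      rw [hexpand, pow_succ', nsmul_eq_mul, mul_sub]; abel
    exact hsub ▸ K.add_mem (K.nsmul_mem (ih hL) _) (hK _ _)

end WeylPair

section ReductionModH

variable {R A : Type*} [CommRing R] [Ring A] [Algebra R A]

theorem mem_span_algebraMap_iff {h : R} {a : A} :
    a ∈ Ideal.span {algebraMap R A h} ↔ ∃ b, a = h • b := by
  simp only [Ideal.mem_span_singleton', Algebra.smul_def, Algebra.commutes, eq_comm]

instance isTwoSided_span_algebraMap (h : R) : (Ideal.span {algebraMap R A h}).IsTwoSided where
  mul_mem_of_left b ha := by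
    obtain ⟨c, rfl⟩ := mem_span_algebraMap_iff.1 ha
    exact mem_span_algebraMap_iff.2 ⟨c * b, smul_mul_assoc h c b⟩

theorem isUnit_of_sub_one_mem_span_algebraMap [Module.Finite R A] {h : R}
    (hh : h ∈ Ideal.jacobson (⊥ : Ideal R)) {a : A} (ha : a - 1 ∈ Ideal.span {algebraMap R A h}) :
    IsUnit a := by
  obtain ⟨c, hc⟩ := mem_span_algebraMap_iff.1 ha
  obtain rfl : a = 1 + h • c := eq_add_of_sub_eq' hc
  have surjective_of_sub (f : A →ₗ[R] A) (hf : ∀ b, ∃ d, b - f b = h • d) :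
      Function.Surjective f := by
    refine LinearMap.range_eq_top.1 (top_le_iff.1 ?_)
    refine Submodule.le_of_le_smul_of_le_jacobson_bot Module.Finite.fg_top
      ((Ideal.span_singleton_le_iff_mem _).2 hh) fun b _ => ?_
    obtain ⟨d, hd⟩ := hf b
    rw [← add_sub_cancel (f b) b, hd]
    exact Submodule.add_mem_sup (LinearMap.mem_range_self f b)
      (Submodule.smul_mem_smul (Ideal.mem_span_singleton_self h) trivial)
  exact isUnit_iff_exists_and_exists.2
    ⟨surjective_of_sub (LinearMap.mulLeft R _) (fun b => ⟨-(c * b), by simp [add_mul]⟩) 1,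
      surjective_of_sub (LinearMap.mulRight R _) (fun b => ⟨-(b * c), by simp [mul_add]⟩) 1⟩

theorem isUnit_of_isUnit_mk_span_algebraMap [Module.Finite R A] {h : R}
    (hh : h ∈ Ideal.jacobson (⊥ : Ideal R)) {a : A}
    (ha : IsUnit (Ideal.Quotient.mk (Ideal.span {algebraMap R A h}) a)) : IsUnit a := by
  obtain ⟨v, hv⟩ := ha
  obtain ⟨b, hb⟩ := Ideal.Quotient.mk_surjective (↑v⁻¹ : A ⧸ Ideal.span {algebraMap R A h})
  have isUnit_of_mk_eq_one {c : A}
      (hc : Ideal.Quotient.mk (Ideal.span {algebraMap R A h}) c = 1) : IsUnit c :=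
    isUnit_of_sub_one_mem_span_algebraMap hh <| Ideal.Quotient.eq.1 (hc.trans (map_one _).symm)
  have hab : IsUnit (a * b) := isUnit_of_mk_eq_one (by rw [map_mul, hb, ← hv, v.mul_inv])
  have hba : IsUnit (b * a) := isUnit_of_mk_eq_one (by rw [map_mul, hb, ← hv, v.inv_mul])
  obtain ⟨c, hc⟩ := hab.exists_right_inv
  obtain ⟨d, hd⟩ := hba.exists_left_inv
  exact isUnit_iff_exists_and_exists.2
    ⟨⟨b * c, by rw [← mul_assoc, hc]⟩, ⟨d * b, by rw [mul_assoc, hd]⟩⟩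

theorem isNilpotent_of_mem_span_range {B ι : Type*} [Ring B] (hB : ∀ a b : B, Commute a b)
    {z : ι → B} (hz : ∀ i, IsNilpotent (z i)) {k : B} (hk : k ∈ Ideal.span (Set.range z)) :
    IsNilpotent k := by
  induction hk using Submodule.span_induction with
  | mem _ hx => obtain ⟨i, rfl⟩ := hx; exact hz i
  | zero => exact IsNilpotent.zero
  | add a b _ _ ha hb => exact (hB a b).isNilpotent_add ha hb
  | smul a b _ hb => exact (hB a b).isNilpotent_mul_left hb

theorem isUnit_of_sub_mem_span_range [Module.Finite R A] {h : R}
    (hh : h ∈ Ideal.jacobson (⊥ : Ideal R))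
    (hA : ∀ a b : A ⧸ Ideal.span {algebraMap R A h}, Commute a b)
    {ι : Type*} {z : ι → A} (hz : ∀ i, IsNilpotent (z i)) {u c : A} (hc : IsUnit c)
    (hu : u - c ∈ Ideal.span (Set.range z)) : IsUnit u := by
  set π := Ideal.Quotient.mk (Ideal.span {algebraMap R A h})
  have hmem : π (u - c) ∈ Ideal.span (Set.range (π ∘ z)) := by
    rw [Set.range_comp]
    exact Ideal.map_span π (Set.range z) ▸ Ideal.mem_map_of_mem π hu
  have hnil : IsNilpotent (π (u - c)) :=
    isNilpotent_of_mem_span_range hA (fun i => (hz i).map π) hmem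
  apply isUnit_of_isUnit_mk_span_algebraMap hh
  rw [← add_sub_cancel c u, map_add]
  exact hnil.isUnit_add_left_of_commute (hc.map π) (hA _ _)

end ReductionModH

section Division

variable {R M N : Type*} [CommSemiring R] [AddCommMonoid M] [AddCommMonoid N] [Module R M]
  [Module R N]

theorem isSMulRegular_linearMap {h : R} (hh : IsSMulRegular N h) :
    IsSMulRegular (M →ₗ[R] N) h :=
  fun _ _ hfg => LinearMap.ext fun m => hh (LinearMap.congr_fun hfg m)

theorem exists_smul_eq_linearMap {h : R} (hh : IsSMulRegular N h) {f : M →ₗ[R] N}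
    (hf : ∀ m, ∃ n, f m = h • n) : ∃ g : M →ₗ[R] N, f = h • g := by
  choose g hg using hf
  refine ⟨⟨⟨g, fun a b => hh ?_⟩, fun r a => hh ?_⟩, LinearMap.ext hg⟩
  · simp only [smul_add, ← hg, map_add]
  · simp only [RingHom.id_apply, smul_comm h r, ← hg, map_smul]

end Division

section TwistedCommutator

variable {R A : Type*} [CommRing R] [Ring A] [Algebra R A]

variable (R) in
/-- The twisted commutator `m ↦ a * m - m * b`. An element `u` satisfies `a * u = u * b` exactly
when it lies in the kernel of this operator. -/
def twistedCommutator (a b : A) : Module.End R A :=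
  LinearMap.mulLeft R a - LinearMap.mulRight R b

@[simp]
theorem twistedCommutator_apply (a b m : A) : twistedCommutator R a b m = a * m - m * b := rfl

theorem twistedCommutator_commute {a b a' b' : A} {c : R}
    (ha : a * a' = a' * a + algebraMap R A c) (hb : b * b' = b' * b + algebraMap R A c) :
    Commute (twistedCommutator R a b) (twistedCommutator R a' b') := by
  refine LinearMap.ext fun m => sub_eq_zero.1 ?_
  calc a * (a' * m - m * b') - (a' * m - m * b') * b
        - (a' * (a * m - m * b) - (a * m - m * b) * b')
      = (a * a' - a' * a) * m - m * (b * b' - b' * b) := by noncomm_ring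
    _ = 0 := by rw [ha, hb, add_sub_cancel_left, add_sub_cancel_left, Algebra.commutes, sub_self]

theorem twistedCommutator_pow_eq_zero {p : ℕ} (hp : p.Prime) (hpR : (p : R) = 0) {a b : A}
    (ha : a ^ p = 0) (hb : b ^ p = 0) : twistedCommutator R a b ^ p = 0 := by
  have hpE : (p : Module.End R A) = 0 := by
    rw [← map_natCast (algebraMap R (Module.End R A)), hpR, map_zero]
  have hL : (LinearMap.mulLeft R a : Module.End R A) ^ p = 0 := by
    rw [LinearMap.pow_mulLeft, ha, LinearMap.mulLeft_zero_eq_zero]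
  have hR : (LinearMap.mulRight R (-b) : Module.End R A) ^ p = 0 := by
    rw [LinearMap.pow_mulRight, neg_pow, hb, mul_zero, LinearMap.mulRight_zero_eq_zero]
  have hsum : twistedCommutator R a b = LinearMap.mulLeft R a + LinearMap.mulRight R (-b) := by
    ext m
    simp [sub_eq_add_neg]
  rw [hsum]
  exact add_pow_prime_eq_zero_of_commute hp hpE (LinearMap.commute_mulLeft_right a (-b)) hL hR

theorem twistedCommutator_mul_mulRight {a b z : A} {c : R}
    (hbz : b * z = z * b + algebraMap R A c) :
    twistedCommutator R a b * LinearMap.mulRight R z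
      = LinearMap.mulRight R z * twistedCommutator R a b + c • 1 := by
  ext m
  simp only [Module.End.mul_apply, LinearMap.mulRight_apply, twistedCommutator_apply,
    LinearMap.add_apply, LinearMap.smul_apply, Module.End.one_apply, sub_mul, mul_assoc, hbz,
    mul_add, Algebra.algebraMap_eq_smul_one, mul_smul_comm, mul_one]
  abel

variable {ι : Type*} [DecidableEq ι] {h : R}

theorem exists_commuting_quotients (hA : IsSMulRegular A h) {w w' z : ι → A} {c : ι → ι → R}
    (hw : ∀ i j, w i * w j = w j * w i + algebraMap R A (c i j))
    (hw' : ∀ i j, w' i * w' j = w' j * w' i + algebraMap R A (c i j))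
    (hwz : ∀ i j, w i * z j = z j * w i + algebraMap R A (if i = j then h else 0))
    (hdiv : ∀ j a, ∃ b, w' j * a - a * w j = h • b) :
    ∃ δ : ι → Module.End R A, (∀ i, twistedCommutator R (w' i) (w i) = h • δ i) ∧
      (∀ i j, Commute (δ i) (δ j)) ∧
      ∀ i j, δ i * LinearMap.mulRight R (z j)
        = LinearMap.mulRight R (z j) * δ i + if i = j then 1 else 0 := by
  choose δ hδ using fun i => exists_smul_eq_linearMap (f := twistedCommutator R (w' i) (w i)) hA
    (hdiv i)
  have hreg : IsSMulRegular (Module.End R A) h := isSMulRegular_linearMap hA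
  refine ⟨δ, hδ, fun i j => hreg (hreg ?_), fun i j => hreg ?_⟩
  · simpa only [hδ, smul_mul_smul_comm, mul_smul] using
      (twistedCommutator_commute (hw' i j) (hw i j)).eq
  · have hrel := twistedCommutator_mul_mulRight (a := w' i) (hwz i j)
    rw [hδ, smul_mul_assoc, mul_smul_comm] at hrel
    simp only [hrel, smul_add]
    split_ifs <;> simp

theorem exists_intertwiner [Fintype ι] {p : ℕ} (hp : p.Prime) (hpR : (p : R) = 0)
    (hA : IsSMulRegular A h) {w w' z : ι → A} (hwp : ∀ i, w i ^ p = 0)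
    (hwp' : ∀ i, w' i ^ p = 0) {c : ι → ι → R}
    (hw : ∀ i j, w i * w j = w j * w i + algebraMap R A (c i j))
    (hw' : ∀ i j, w' i * w' j = w' j * w' i + algebraMap R A (c i j))
    (hwz : ∀ i j, w i * z j = z j * w i + algebraMap R A (if i = j then h else 0))
    (hdiv : ∀ j a, ∃ b, w' j * a - a * w j = h • b) :
    ∃ u : A, (∀ j, w' j * u = u * w j) ∧
      u - ((p - 1).factorial : A) ^ Fintype.card ι ∈ Ideal.span (Set.range z) := by
  obtain ⟨δ, hδ, hδδ, hδz⟩ := exists_commuting_quotients hA hw hw' hwz hdiv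
  have hreg : IsSMulRegular (Module.End R A) (h ^ p) := (isSMulRegular_linearMap hA).pow p
  have hδp (j : ι) : δ j ^ (p - 1 + 1) = 0 := hreg <| by
    simp only [Nat.sub_add_cancel hp.one_le, smul_zero, ← smul_pow, ← hδ,
      twistedCommutator_pow_eq_zero hp hpR (hwp' j) (hwp j)]
  set L := (Finset.univ : Finset ι).toList
  set T := (L.map fun i => δ i ^ (p - 1)).prod
  set V := (L.map fun i => (LinearMap.mulRight R (z i) : Module.End R A) ^ (p - 1)).prod
  refine ⟨(T * V) 1, fun j => sub_eq_zero.1 ?_, ?_⟩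
  · have hδT : δ j * T = 0 := mul_list_prod_map_pow_eq_zero hδδ (hδp j) (by simp [L])
    rw [← twistedCommutator_apply (R := R), hδ, LinearMap.smul_apply, ← Module.End.mul_apply,
      ← mul_assoc, hδT, zero_mul, LinearMap.zero_apply, smul_zero]
  · let K : AddSubgroup (Module.End R A) :=
      (Ideal.span (Set.range z)).toAddSubgroup.comap
        (LinearMap.applyₗ (R := R) (1 : A)).toAddMonoidHom
    have hTV : T * V - ((p - 1).factorial : Module.End R A) ^ L.length ∈ K :=
      list_prod_pow_mul_prod_pow_sub_mem hδδ hδz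
        (fun j e => Ideal.mul_mem_left _ (e 1) (Ideal.subset_span (Set.mem_range_self j))) (p - 1)
        (Finset.nodup_toList _)
    have heval : (((p - 1).factorial : Module.End R A) ^ L.length) 1
        = ((p - 1).factorial : A) ^ Fintype.card ι := by
      rw [← Nat.cast_pow, Module.End.natCast_apply, nsmul_one, Nat.cast_pow, Finset.length_toList,
        Finset.card_univ]
    rw [← heval]
    exact hTV

end TwistedCommutator

section DerivationQuotient

variable {R A : Type*} [CommRing R] [CommRing A] [Algebra R A]

/-- The derivation of `A ⧸ I` induced by a derivation `D` of `A` that maps the ideal `I` into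
itself. -/
def derivationQuotient (D : Derivation R A A) (I : Ideal A) (hD : ∀ a ∈ I, D a ∈ I) :
    Derivation R (A ⧸ I) (A ⧸ I) :=
  Derivation.mk'
    (Submodule.mapQ (I.restrictScalars R) (I.restrictScalars R) D.toLinearMap hD :
      (A ⧸ I) →ₗ[R] (A ⧸ I)) <| by
    intro a b
    obtain ⟨a, rfl⟩ := Ideal.Quotient.mk_surjective a
    obtain ⟨b, rfl⟩ := Ideal.Quotient.mk_surjective b
    exact congrArg (Ideal.Quotient.mk I) (D.leibniz a b)

@[simp]
theorem derivationQuotient_mk (D : Derivation R A A) (I : Ideal A) (hD : ∀ a ∈ I, D a ∈ I)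
    (a : A) : derivationQuotient D I hD (Ideal.Quotient.mk I a) = Ideal.Quotient.mk I (D a) :=
  rfl

end DerivationQuotient

section AdjoinEqTop

variable {R A : Type*} [CommSemiring R] [Semiring A] [Algebra R A] {s : Set A}

theorem commute_of_adjoin_eq_top (hs : Algebra.adjoin R s = ⊤)
    (hcomm : ∀ a ∈ s, ∀ b ∈ s, Commute a b) (a b : A) : Commute a b := by
  have := Algebra.isMulCommutative_adjoin R hcomm
  exact setLike_mul_comm (hs ▸ Algebra.mem_top : a ∈ Algebra.adjoin R s) (hs ▸ Algebra.mem_top)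

theorem intertwine_of_adjoin_eq_top {B : Type*} [Semiring B] [Algebra R B]
    (hs : Algebra.adjoin R s = ⊤) {f g : A →ₐ[R] B} {u : B} (hu : ∀ a ∈ s, f a * u = u * g a)
    (a : A) : f a * u = u * g a := by
  have ha : a ∈ Algebra.adjoin R s := hs ▸ Algebra.mem_top
  induction ha using Algebra.adjoin_induction with
  | mem a ha => exact hu a ha
  | algebraMap r => rw [f.commutes, g.commutes, Algebra.commutes]
  | add a b _ _ ha hb => rw [map_add, map_add, add_mul, mul_add, ha, hb]
  | mul a b _ _ ha hb => rw [map_mul, map_mul, mul_assoc, hb, ← mul_assoc, ha, mul_assoc]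

theorem eq_zero_of_commute_lmul (hs : Algebra.adjoin R s = ⊤) {T : Module.End R A}
    (hT : ∀ a ∈ s, Commute T (Algebra.lmul R A a)) (hT1 : T 1 = 0) : T = 0 := by
  have hle : Algebra.adjoin R s ≤ (Subalgebra.centralizer R {T}).comap (Algebra.lmul R A) :=
    Algebra.adjoin_le fun a ha =>
      Subalgebra.mem_centralizer_iff R |>.2 (by simpa [commute_iff_eq] using hT a ha)
  ext a
  have ha : Commute T (Algebra.lmul R A a) :=
    Subalgebra.mem_centralizer_iff R |>.1 (hle (hs ▸ Algebra.mem_top : a ∈ _)) T rfl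
  simpa [hT1] using LinearMap.congr_fun ha.eq 1

theorem map_representation_of_adjoin_eq_top {M : Type*} [AddCommMonoid M] [Module R M]
    (hs : Algebra.adjoin R s = ⊤) {ρ : A →ₐ[R] Module.End R M} {N : M →ₗ[R] A}
    (hN : ∀ a ∈ s, ∀ m, N (ρ a m) = a * N m) (a : A) (m : M) : N (ρ a m) = a * N m := by
  have ha : a ∈ Algebra.adjoin R s := hs ▸ Algebra.mem_top
  induction ha using Algebra.adjoin_induction generalizing m with
  | mem a ha => exact hN a ha m
  | algebraMap r => simp [Algebra.algebraMap_eq_smul_one]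
  | add a b _ _ ha hb => rw [map_add, LinearMap.add_apply, map_add, ha, hb, add_mul]
  | mul a b _ _ ha hb => rw [map_mul, Module.End.mul_apply, ha, hb, mul_assoc]

end AdjoinEqTop

section Derivation

variable {R B : Type*} [CommSemiring R] [CommSemiring B] [Algebra R B] (D : Derivation R B B)

theorem derivation_mul_lmul (a : B) :
    (D : Module.End R B) * Algebra.lmul R B a
      = Algebra.lmul R B a * D + Algebra.lmul R B (D a) := by
  ext b
  simp [mul_comm b]

theorem mul_map_eq_of_adjoin_eq_top {A : Type*} [Semiring A] [Algebra R A] {s : Set B}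
    (hs : Algebra.adjoin R s = ⊤) {f : B →ₐ[R] A} {y : A} {h : R}
    (hy : ∀ b ∈ s, y * f b = f b * y + h • f (D b)) (b : B) :
    y * f b = f b * y + h • f (D b) := by
  have hb : b ∈ Algebra.adjoin R s := hs ▸ Algebra.mem_top
  induction hb using Algebra.adjoin_induction with
  | mem b hb => exact hy b hb
  | algebraMap r =>
    rw [f.commutes, Derivation.map_algebraMap, map_zero, smul_zero, add_zero, Algebra.commutes]
  | add a b _ _ ha hb => simp only [map_add, mul_add, add_mul, ha, hb, smul_add]; abel
  | mul a b _ _ ha hb =>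
    rw [map_mul, ← mul_assoc, ha, add_mul, mul_assoc, hb, Derivation.leibniz, smul_eq_mul,
      smul_eq_mul, mul_comm b, map_add, map_mul, map_mul, mul_add, mul_smul_comm, smul_mul_assoc,
      smul_add, mul_assoc, add_assoc]

end Derivation

/-- The truncated polynomial algebra `R[X_i : i ∈ σ] / (X_i ^ p : i ∈ σ)`. -/
abbrev TruncPoly (p : ℕ) (σ R : Type*) [CommRing R] : Type _ :=
  MvPolynomial σ R ⧸ Ideal.span (Set.range fun i : σ => (MvPolynomial.X i ^ p : MvPolynomial σ R))

namespace TruncPoly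

variable {p : ℕ} {σ R : Type*} [CommRing R]

/-- The class of the variable `X_i` in the truncated polynomial algebra. -/
def X (i : σ) : TruncPoly p σ R := Ideal.Quotient.mk _ (MvPolynomial.X i)

theorem X_pow (i : σ) : (X i : TruncPoly p σ R) ^ p = 0 := by
  rw [X, ← map_pow]
  exact Ideal.Quotient.eq_zero_iff_mem.2 (Ideal.subset_span (Set.mem_range_self i))

theorem adjoin_range_X : Algebra.adjoin R (Set.range (X : σ → TruncPoly p σ R)) = ⊤ := by
  have hX : Set.range (X : σ → TruncPoly p σ R)
      = Ideal.Quotient.mkₐ R _ '' Set.range MvPolynomial.X := by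
    rw [← Set.range_comp]; rfl
  rw [hX, Algebra.adjoin_image, MvPolynomial.adjoin_range_X, Algebra.map_top,
    AlgHom.range_eq_top]
  exact Ideal.Quotient.mkₐ_surjective R _

section Lift

variable {A : Type*} [Ring A] [Algebra R A]

open scoped IsMulCommutative in
theorem exists_lift {a : σ → A} (hcomm : ∀ i j, Commute (a i) (a j)) (hpow : ∀ i, a i ^ p = 0) :
    ∃ f : TruncPoly p σ R →ₐ[R] A, ∀ i, f (X i) = a i := by
  have := Algebra.isMulCommutative_adjoin R (s := Set.range a) (by
    rintro _ ⟨i, rfl⟩ _ ⟨j, rfl⟩; exact hcomm i j)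
  let b (i : σ) : Algebra.adjoin R (Set.range a) :=
    ⟨a i, Algebra.subset_adjoin (Set.mem_range_self i)⟩
  have hker : ∀ f ∈ Ideal.span (Set.range fun i : σ => (MvPolynomial.X i ^ p : MvPolynomial σ R)),
      MvPolynomial.aeval b f = 0 := by
    suffices Ideal.span _ ≤ RingHom.ker (MvPolynomial.aeval (R := R) b) from this
    rw [Ideal.span_le]
    rintro _ ⟨i, rfl⟩
    simpa [b, Subtype.ext_iff] using hpow i
  exact ⟨(Subalgebra.val _).comp (Ideal.Quotient.liftₐ _ (MvPolynomial.aeval b) hker),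
    fun i => congrArg Subtype.val (MvPolynomial.aeval_X b i)⟩

end Lift

section Free

theorem coeff_eq_zero_of_mem {f : MvPolynomial σ R}
    (hf : f ∈ Ideal.span (Set.range fun i : σ => (MvPolynomial.X i ^ p : MvPolynomial σ R)))
    {m : σ →₀ ℕ} (hm : ∀ i, m i < p) : f.coeff m = 0 := by
  have hrange : (Set.range fun i : σ => (MvPolynomial.X i ^ p : MvPolynomial σ R))
      = (fun m => MvPolynomial.monomial m (1 : R)) '' Set.range (Finsupp.single · p) := by
    rw [← Set.range_comp]
    simp only [Function.comp_def, MvPolynomial.X_pow_eq_monomial]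
  rw [hrange, MvPolynomial.mem_ideal_span_monomial_image] at hf
  by_contra hne
  obtain ⟨_, ⟨i, rfl⟩, hi⟩ := hf m (MvPolynomial.mem_support_iff.2 hne)
  exact (hm i).not_ge (by simpa using hi i)

theorem mk_monomial_eq_zero {m : σ →₀ ℕ} {i : σ} (hi : p ≤ m i) :
    (Ideal.Quotient.mk _ (MvPolynomial.monomial m 1) : TruncPoly p σ R) = 0 := by
  have hdvd : (MvPolynomial.X i ^ p : MvPolynomial σ R) ∣ MvPolynomial.monomial m 1 := by
    rw [MvPolynomial.X_pow_eq_monomial]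
    exact MvPolynomial.monomial_dvd_monomial.2
      ⟨.inr (Finsupp.single_le_iff.2 hi), dvd_rfl⟩
  exact Ideal.Quotient.eq_zero_iff_mem.2
    (Ideal.mem_of_dvd _ hdvd (Ideal.subset_span (Set.mem_range_self i)))

/-- The coefficients of a polynomial at the monomials all of whose exponents are less than `p`.
They depend only on the class of the polynomial in `TruncPoly p σ R`, and determine it. -/
def reducedCoeffs (p : ℕ) (σ R : Type*) [CommRing R] :
    MvPolynomial σ R →ₗ[R] {m : σ →₀ ℕ // ∀ i, m i < p} →₀ R :=
  Finsupp.lsubtypeDomain {m : σ →₀ ℕ | ∀ i, m i < p} ∘ₗ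
    (MvPolynomial.basisMonomials σ R).repr.toLinearMap

theorem reducedCoeffs_monomial_of_lt {m : σ →₀ ℕ} (hm : ∀ i, m i < p) :
    reducedCoeffs p σ R (MvPolynomial.monomial m 1) = Finsupp.single ⟨m, hm⟩ 1 := by
  classical
  refine Finsupp.ext fun k => (MvPolynomial.coeff_monomial k.1 m 1).trans ?_
  simp [Finsupp.single_apply, Subtype.ext_iff]

theorem reducedCoeffs_monomial_of_le {m : σ →₀ ℕ} {i : σ} (hi : p ≤ m i) :
    reducedCoeffs p σ R (MvPolynomial.monomial m 1) = 0 := by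
  classical
  refine Finsupp.ext fun k => (MvPolynomial.coeff_monomial k.1 m 1).trans (if_neg ?_)
  rintro rfl
  exact (k.2 i).not_ge hi

variable (p σ R) in
theorem exists_linear_retract :
    ∃ (coeffs : TruncPoly p σ R →ₗ[R] {m : σ →₀ ℕ // ∀ i, m i < p} →₀ R)
      (eval : ({m : σ →₀ ℕ // ∀ i, m i < p} →₀ R) →ₗ[R] TruncPoly p σ R),
      eval ∘ₗ coeffs = LinearMap.id := by
  let I := Ideal.span (Set.range fun i : σ => (MvPolynomial.X i ^ p : MvPolynomial σ R))
  let coeffs : TruncPoly p σ R →ₗ[R] {m : σ →₀ ℕ // ∀ i, m i < p} →₀ R :=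
    (I.restrictScalars R).liftQ (reducedCoeffs p σ R) fun f hf =>
      Finsupp.ext fun m => coeff_eq_zero_of_mem hf m.2
  let eval := Finsupp.linearCombination R fun m : {m : σ →₀ ℕ // ∀ i, m i < p} =>
    Ideal.Quotient.mk I (MvPolynomial.monomial m.1 1)
  have hmonomial : eval ∘ₗ reducedCoeffs p σ R = (Ideal.Quotient.mkₐ R I).toLinearMap := by
    refine (MvPolynomial.basisMonomials σ R).ext fun m => ?_
    rw [MvPolynomial.coe_basisMonomials, LinearMap.comp_apply]
    by_cases hm : ∀ i, m i < p
    · simp [eval, reducedCoeffs_monomial_of_lt hm]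
    · obtain ⟨i, hi⟩ := not_forall.1 hm
      rw [reducedCoeffs_monomial_of_le (not_lt.1 hi), map_zero]
      exact (mk_monomial_eq_zero (not_lt.1 hi)).symm
  refine ⟨coeffs, eval, LinearMap.ext fun f => ?_⟩
  obtain ⟨f, rfl⟩ := Ideal.Quotient.mk_surjective f
  exact LinearMap.congr_fun hmonomial f

instance [Finite σ] : Module.Finite R (TruncPoly p σ R) := by
  obtain ⟨coeffs, eval, h⟩ := exists_linear_retract p σ R
  have : Finite {m : σ →₀ ℕ // ∀ i, m i < p} :=
    Finite.of_injective (fun m i => (⟨m.1 i, m.2 i⟩ : Fin p)) fun a b hab =>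
      Subtype.ext <| Finsupp.ext fun i => congrArg Fin.val (congrFun hab i)
  exact .of_surjective eval fun f => ⟨coeffs f, LinearMap.congr_fun h f⟩

instance : Module.Projective R (TruncPoly p σ R) := by
  obtain ⟨coeffs, eval, h⟩ := exists_linear_retract p σ R
  exact .of_split coeffs eval h

end Free

section Derivative

variable (hpR : (p : R) = 0)
include hpR

theorem pderiv_mem (i : σ) (f : MvPolynomial σ R)
    (hf : f ∈ Ideal.span (Set.range fun i : σ => (MvPolynomial.X i ^ p : MvPolynomial σ R))) :
    MvPolynomial.pderiv i f ∈
      Ideal.span (Set.range fun i : σ => (MvPolynomial.X i ^ p : MvPolynomial σ R)) := by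
  induction hf using Submodule.span_induction with
  | mem _ hx =>
    obtain ⟨j, rfl⟩ := hx
    have hp : (p : MvPolynomial σ R) = 0 := by rw [← map_natCast MvPolynomial.C, hpR, map_zero]
    simp [Derivation.leibniz_pow, hp]
  | zero => simp
  | add f g _ _ hf hg => rw [map_add]; exact add_mem hf hg
  | smul g f hf hfD =>
    rw [smul_eq_mul, Derivation.leibniz]
    exact add_mem (Ideal.mul_mem_left _ _ hfD) (Ideal.mul_mem_right _ _ hf)

/-- The partial derivative `∂/∂X_i` of the truncated polynomial algebra, which exists because
`∂(X_i ^ p) = p X_i ^ (p - 1)` vanishes in characteristic `p`. -/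
def pderiv (i : σ) : Derivation R (TruncPoly p σ R) (TruncPoly p σ R) :=
  derivationQuotient (MvPolynomial.pderiv i) _ (pderiv_mem hpR i)

theorem pderiv_X [DecidableEq σ] (i j : σ) :
    pderiv hpR i (X j) = if i = j then 1 else 0 := by
  rw [pderiv, X, derivationQuotient_mk, MvPolynomial.pderiv_X]
  split_ifs with hij <;> simp [hij]

theorem pderiv_commute (i j : σ) :
    Commute (pderiv hpR i : Module.End R (TruncPoly p σ R)) (pderiv hpR j) := by
  classical
  have hzero : ⁅pderiv hpR i, pderiv hpR j⁆ = 0 := by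
    refine Derivation.ext_of_adjoin_eq_top _ adjoin_range_X ?_
    rintro _ ⟨k, rfl⟩
    simp only [Derivation.commutator_apply, pderiv_X, apply_ite, Derivation.map_one_eq_zero,
      map_zero, ite_self, sub_self, Derivation.zero_apply]
  exact LinearMap.ext fun f => sub_eq_zero.1 (Derivation.congr_fun hzero f)

theorem pderiv_mul_lmul_X [DecidableEq σ] (i j : σ) :
    (pderiv hpR i : Module.End R (TruncPoly p σ R)) * Algebra.lmul R (TruncPoly p σ R) (X j)
      = Algebra.lmul R (TruncPoly p σ R) (X j) * ↑(pderiv hpR i) + if i = j then 1 else 0 := by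
  rw [derivation_mul_lmul, pderiv_X, apply_ite (Algebra.lmul R _), map_one, map_zero]

theorem pderiv_pow (hp : p ≠ 0) (i : σ) :
    (pderiv hpR i : Module.End R (TruncPoly p σ R)) ^ p = 0 := by
  classical
  obtain ⟨m, rfl⟩ := Nat.exists_eq_succ_of_ne_zero hp
  refine eq_zero_of_commute_lmul adjoin_range_X ?_ (by simp [pow_succ])
  rintro _ ⟨k, rfl⟩
  have hik := pderiv_mul_lmul_X hpR i k
  split_ifs at hik with h
  · have hzero : ((m + 1 : ℕ) : Module.End R (TruncPoly (m + 1) σ R)) = 0 := by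
      rw [← map_natCast (algebraMap R _), hpR, map_zero]
    simpa [commute_iff_eq, hzero] using pow_succ_mul_eq_of_mul_eq_add_one hik m
  · exact Commute.pow_left (by simpa [commute_iff_eq] using hik) _

end Derivative

end TruncPoly

namespace ReesWeyl

open scoped TensorProduct

variable {p n : ℕ} {R : Type} [CommRing R] {h : R}

/-- The generators of the Rees reduced Weyl algebra as one family: the `x_i` are indexed by
`Sum.inl i` and the `y_j` by `Sum.inr j`. -/
def gen : Fin n ⊕ Fin n → ReesWeyl p n R h := Sum.elim (reesX p n R h) (reesY p n R h)

/-- The family dual to `gen` under the commutator pairing: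
`⁅gen i, dualGen j⁆ = h` if `i = j` and `0` otherwise. -/
def dualGen : Fin n ⊕ Fin n → ReesWeyl p n R h :=
  Sum.elim (fun i => -reesY p n R h i) (reesX p n R h)

theorem reesX_commute (i j : Fin n) : Commute (reesX p n R h i) (reesX p n R h j) := by
  simpa [reesX, commute_iff_eq] using RingQuot.mkAlgHom_rel R (ReesWeylRel.xx (p := p) (h := h) i j)

theorem reesY_commute (i j : Fin n) : Commute (reesY p n R h i) (reesY p n R h j) := by
  simpa [reesY, commute_iff_eq] using RingQuot.mkAlgHom_rel R (ReesWeylRel.yy (p := p) (h := h) i j)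

theorem reesY_mul_reesX (i j : Fin n) :
    reesY p n R h j * reesX p n R h i
      = reesX p n R h i * reesY p n R h j + algebraMap R _ (if i = j then h else 0) := by
  have hrel := RingQuot.mkAlgHom_rel R (ReesWeylRel.yx (p := p) (h := h) i j)
  split_ifs at hrel ⊢ <;> simpa [reesX, reesY] using hrel

theorem reesX_pow (i : Fin n) : reesX p n R h i ^ p = 0 := by
  simpa [reesX] using RingQuot.mkAlgHom_rel R (ReesWeylRel.xp (p := p) (h := h) i)

theorem reesY_pow (j : Fin n) : reesY p n R h j ^ p = 0 := by
  simpa [reesY] using RingQuot.mkAlgHom_rel R (ReesWeylRel.yp (p := p) (h := h) j)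

theorem adjoin_range_gen :
    Algebra.adjoin R (Set.range (gen : Fin n ⊕ Fin n → ReesWeyl p n R h)) = ⊤ := by
  have hgen : (gen : Fin n ⊕ Fin n → ReesWeyl p n R h)
      = RingQuot.mkAlgHom R (ReesWeylRel p n R h) ∘ FreeAlgebra.ι R :=
    funext fun i => by cases i <;> rfl
  rw [hgen, Set.range_comp, Algebra.adjoin_image, FreeAlgebra.adjoin_range_ι, Algebra.map_top,
    AlgHom.range_eq_top]
  exact RingQuot.mkAlgHom_surjective R _

theorem exists_lift {A : Type*} [Ring A] [Algebra R A] {x y : Fin n → A}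
    (hx : ∀ i j, Commute (x i) (x j)) (hy : ∀ i j, Commute (y i) (y j))
    (hyx : ∀ i j, y j * x i = x i * y j + algebraMap R A (if i = j then h else 0))
    (hxp : ∀ i, x i ^ p = 0) (hyp : ∀ j, y j ^ p = 0) :
    ∃ f : ReesWeyl p n R h →ₐ[R] A,
      (∀ i, f (reesX p n R h i) = x i) ∧ ∀ j, f (reesY p n R h j) = y j := by
  let F := FreeAlgebra.lift R (Sum.elim x y)
  have hF : ∀ ⦃a b⦄, ReesWeylRel p n R h a b → F a = F b := by
    rintro _ _ (⟨i, j⟩ | ⟨i, j⟩ | ⟨i, j⟩ | ⟨i⟩ | ⟨j⟩)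
    · simpa [F] using (hx i j).eq
    · simpa [F] using (hy i j).eq
    · have := hyx i j
      split_ifs at this ⊢ <;> simpa [F] using this
    · simpa [F] using hxp i
    · simpa [F] using hyp j
  exact ⟨RingQuot.liftAlgHom R ⟨F, hF⟩, fun i => by simp [reesX, F], fun j => by simp [reesY, F]⟩

theorem gen_pow (i : Fin n ⊕ Fin n) : (gen i : ReesWeyl p n R h) ^ p = 0 := by
  cases i with
  | inl i => exact reesX_pow i
  | inr i => exact reesY_pow i

theorem isNilpotent_dualGen (i : Fin n ⊕ Fin n) : IsNilpotent (dualGen i : ReesWeyl p n R h) := by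
  cases i with
  | inl i => exact IsNilpotent.neg ⟨p, reesY_pow i⟩
  | inr i => exact ⟨p, reesX_pow i⟩

theorem gen_mul_gen (i j : Fin n ⊕ Fin n) :
    (gen i * gen j : ReesWeyl p n R h)
      = gen j * gen i + algebraMap R _ (h * Matrix.J (Fin n) R i j) := by
  rcases i with i | i <;> rcases j with j | j <;>
    simp only [gen, Sum.elim_inl, Sum.elim_inr, Matrix.J, Matrix.fromBlocks_apply₁₁,
      Matrix.fromBlocks_apply₁₂, Matrix.fromBlocks_apply₂₁, Matrix.fromBlocks_apply₂₂]
  · simpa using (reesX_commute i j).eq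
  · rw [reesY_mul_reesX, add_assoc, ← map_add]
    simp [Matrix.one_apply]
  · simpa [Matrix.one_apply, eq_comm] using reesY_mul_reesX j i
  · simpa using (reesY_commute i j).eq

theorem gen_mul_dualGen (i j : Fin n ⊕ Fin n) :
    (gen i * dualGen j : ReesWeyl p n R h)
      = dualGen j * gen i + algebraMap R _ (if i = j then h else 0) := by
  have mul_neg_eq {A : Type} [Ring A] {a b c : A} (hba : b * a = a * b + c) :
      a * -b = -b * a + c := by
    rw [neg_mul, hba, mul_neg]; abel
  rcases i with i | i <;> rcases j with j | j <;>
    simp only [gen, dualGen, Sum.elim_inl, Sum.elim_inr, Sum.inl.injEq, Sum.inr.injEq,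
      reduceCtorEq, if_false, map_zero, add_zero]
  · exact mul_neg_eq (reesY_mul_reesX i j)
  · exact (reesX_commute i j).eq
  · exact ((reesY_commute i j).neg_right).eq
  · simpa [eq_comm] using reesY_mul_reesX j i

theorem quotient_commute (a b : ReesWeyl p n R h ⧸ Ideal.span {algebraMap R (ReesWeyl p n R h) h}) :
    Commute a b := by
  let π := Ideal.Quotient.mkₐ R (Ideal.span {algebraMap R (ReesWeyl p n R h) h})
  have hπ : Algebra.adjoin R (Set.range (π ∘ gen)) = ⊤ := by
    rw [Set.range_comp, Algebra.adjoin_image, adjoin_range_gen, Algebra.map_top,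
      AlgHom.range_eq_top]
    exact Ideal.Quotient.mkₐ_surjective R _
  have hπh (r : R) : π (algebraMap R _ (h * r)) = 0 :=
    Ideal.Quotient.eq_zero_iff_mem.2 <| mem_span_algebraMap_iff.2
      ⟨algebraMap R _ r, by rw [map_mul, Algebra.smul_def]⟩
  refine commute_of_adjoin_eq_top hπ ?_ a b
  rintro _ ⟨i, rfl⟩ _ ⟨j, rfl⟩
  simp only [Function.comp_apply, commute_iff_eq, ← map_mul, gen_mul_gen i j, map_add, hπh,
    add_zero]

open Algebra.TensorProduct in
theorem exists_lift_tensorProduct {A B : Type*} [Ring A] [Algebra R A] [Ring B] [Algebra R B]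
    (hp : p.Prime) (hpR : (p : R) = 0) {x d : Fin n → A} {y : Fin n → B}
    (hx : ∀ i j, Commute (x i) (x j)) (hd : ∀ i j, Commute (d i) (d j))
    (hy : ∀ i j, Commute (y i) (y j)) (hdx : ∀ i j, d j * x i = x i * d j + if j = i then 1 else 0)
    (hxp : ∀ i, x i ^ p = 0) (hdp : ∀ j, d j ^ p = 0) (hyp : ∀ j, y j ^ p = 0) :
    ∃ f : ReesWeyl p n R h →ₐ[R] A ⊗[R] B,
      (∀ i, f (reesX p n R h i) = x i ⊗ₜ 1) ∧
        ∀ j, f (reesY p n R h j) = 1 ⊗ₜ y j + h • (d j ⊗ₜ 1) := by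
  have hcross (a : A) (b : B) :
      Commute (1 ⊗ₜ b : A ⊗[R] B) (h • a ⊗ₜ 1) :=
    (show Commute (1 ⊗ₜ b : A ⊗[R] B) (a ⊗ₜ 1) by simp [commute_iff_eq]).smul_right h
  refine exists_lift (fun i j => (hx i j).map (includeLeft : A →ₐ[R] A ⊗[R] B))
    (fun i j => ?_) (fun i j => ?_) (fun i => by simp [tmul_pow, hxp]) (fun j => ?_)
  · have hyy := (hy i j).map (includeRight : B →ₐ[R] A ⊗[R] B)
    have hdd := (((hd i j).map (includeLeft : A →ₐ[R] A ⊗[R] B)).smul_left h).smul_right h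
    exact (hyy.add_right (hcross _ _)).add_left ((hcross _ _).symm.add_right hdd)
  · simp only [mul_add, add_mul, tmul_mul_tmul, one_mul, mul_one, smul_mul_assoc, mul_smul_comm,
      hdx, TensorProduct.add_tmul, smul_add, add_assoc, eq_comm (a := i)]
    split_ifs <;> simp [Algebra.algebraMap_eq_smul_one, one_def]
  · have hpE : (p : A ⊗[R] B) = 0 := by
      rw [← map_natCast (algebraMap R _), hpR, map_zero]
    exact add_pow_prime_eq_zero_of_commute hp hpE (hcross _ _) (by simp [tmul_pow, hyp])
      (by simp [smul_pow, tmul_pow, hdp])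

section NormalOrdering

theorem reesY_mul_map (hpR : (p : R) = 0) {f : TruncPoly p (Fin n) R →ₐ[R] ReesWeyl p n R h}
    (hf : ∀ i, f (TruncPoly.X i) = reesX p n R h i) (j : Fin n) (a : TruncPoly p (Fin n) R) :
    reesY p n R h j * f a
      = f a * reesY p n R h j + h • f (TruncPoly.pderiv hpR j a) := by
  refine mul_map_eq_of_adjoin_eq_top (TruncPoly.pderiv hpR j) TruncPoly.adjoin_range_X ?_ a
  rintro _ ⟨i, rfl⟩
  rw [hf, reesY_mul_reesX, TruncPoly.pderiv_X]
  split_ifs <;> simp_all [Algebra.algebraMap_eq_smul_one]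

theorem exists_representation (hp : p.Prime) (hpR : (p : R) = 0) :
    ∃ ρ : ReesWeyl p n R h →ₐ[R]
        Module.End R (TruncPoly p (Fin n) R ⊗[R] TruncPoly p (Fin n) R),
      (∀ i a b, ρ (reesX p n R h i) (a ⊗ₜ b) = (TruncPoly.X i * a) ⊗ₜ b) ∧
      ∀ j a b, ρ (reesY p n R h j) (a ⊗ₜ b)
        = a ⊗ₜ (TruncPoly.X j * b) + h • (TruncPoly.pderiv hpR j a ⊗ₜ b) := by
  let m (i : Fin n) := Algebra.lmul R (TruncPoly p (Fin n) R) (TruncPoly.X i)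
  have hm (i j : Fin n) : Commute (m i) (m j) := (Commute.all _ _).map (Algebra.lmul R _)
  have hmp (i : Fin n) : m i ^ p = 0 := by rw [← map_pow, TruncPoly.X_pow, map_zero]
  obtain ⟨ρ, hX, hY⟩ := exists_lift_tensorProduct (h := h) hp hpR hm (TruncPoly.pderiv_commute hpR)
    hm (fun i j => TruncPoly.pderiv_mul_lmul_X hpR j i) hmp (TruncPoly.pderiv_pow hpR hp.ne_zero)
    hmp
  exact ⟨Module.endTensorEndAlgHom.comp ρ,
    fun i a b => by simp [hX, m, Module.endTensorEndAlgHom_apply],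
    fun j a b => by simp [hY, m, Module.endTensorEndAlgHom_apply]⟩

theorem exists_linear_retract (hp : p.Prime) (hpR : (p : R) = 0) :
    ∃ (ofNormal : TruncPoly p (Fin n) R ⊗[R] TruncPoly p (Fin n) R →ₗ[R] ReesWeyl p n R h)
      (normal : ReesWeyl p n R h →ₗ[R] TruncPoly p (Fin n) R ⊗[R] TruncPoly p (Fin n) R),
      ofNormal ∘ₗ normal = LinearMap.id := by
  obtain ⟨f, hf⟩ := TruncPoly.exists_lift (R := R) (p := p) (a := reesX p n R h) reesX_commute
    reesX_pow
  obtain ⟨g, hg⟩ := TruncPoly.exists_lift (R := R) (p := p) (a := reesY p n R h) reesY_commute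
    reesY_pow
  obtain ⟨ρ, hX, hY⟩ := exists_representation (n := n) (h := h) hp hpR
  let ofNormal := TensorProduct.lift
    ((LinearMap.mul R (ReesWeyl p n R h)).compl₁₂ f.toLinearMap g.toLinearMap)
  have ofNormal_tmul (a b : TruncPoly p (Fin n) R) : ofNormal (a ⊗ₜ b) = f a * g b := rfl
  have ofNormal_rep (a : ReesWeyl p n R h) (t) : ofNormal (ρ a t) = a * ofNormal t := by
    refine map_representation_of_adjoin_eq_top adjoin_range_gen ?_ a t
    rintro _ ⟨i | j, rfl⟩ t <;> induction t with
    | zero => rw [map_zero, map_zero, mul_zero]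
    | add t t' ht ht' => rw [map_add, map_add, map_add, ht, ht', mul_add]
    | tmul a b => ?_
    · rw [gen, Sum.elim_inl, hX, ofNormal_tmul, ofNormal_tmul, map_mul, hf, mul_assoc]
    · rw [gen, Sum.elim_inr, hY, map_add, map_smul, ofNormal_tmul, ofNormal_tmul,
        ofNormal_tmul, map_mul, hg, ← mul_assoc, ← mul_assoc, reesY_mul_map hpR hf, add_mul,
        smul_mul_assoc]
  refine ⟨ofNormal, LinearMap.applyₗ (1 ⊗ₜ 1) ∘ₗ ρ.toLinearMap, LinearMap.ext fun a => ?_⟩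
  exact (ofNormal_rep a _).trans (by rw [ofNormal_tmul, map_one, map_one, mul_one, mul_one]; rfl)

theorem module_finite (hp : p.Prime) (hpR : (p : R) = 0) :
    Module.Finite R (ReesWeyl p n R h) := by
  obtain ⟨ofNormal, normal, h_id⟩ := exists_linear_retract (n := n) (h := h) hp hpR
  exact .of_surjective ofNormal fun a => ⟨normal a, LinearMap.congr_fun h_id a⟩

theorem module_projective (hp : p.Prime) (hpR : (p : R) = 0) :
    Module.Projective R (ReesWeyl p n R h) := by
  obtain ⟨ofNormal, normal, h_id⟩ := exists_linear_retract (n := n) (h := h) hp hpR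
  exact .of_split normal ofNormal h_id

theorem isSMulRegular (hp : p.Prime) (hpR : (p : R) = 0) {r : R} (hr : r ∈ nonZeroDivisors R) :
    IsSMulRegular (ReesWeyl p n R h) r := by
  have := module_projective (n := n) (h := h) hp hpR
  exact Module.Flat.isSMulRegular_of_nonZeroDivisors (M := ReesWeyl p n R h) hr

end NormalOrdering

theorem isUnit_factorial_pred (hp : p.Prime) (hpR : (p : R) = 0) :
    IsUnit ((p - 1).factorial : ReesWeyl p n R h) := by
  simpa using (isUnit_factorial_pred_of_prime hp hpR).map (algebraMap R (ReesWeyl p n R h))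

theorem exists_map_mul_sub_mul_eq_smul {φ : ReesWeyl p n R h →ₐ[R] ReesWeyl p n R h}
    (hφ : ∀ a, ∃ c, φ a - a = algebraMap R (ReesWeyl p n R h) h * c) (a b : ReesWeyl p n R h) :
    ∃ c, φ a * b - b * a = h • c := by
  refine mem_span_algebraMap_iff.1 (Ideal.Quotient.eq.1 ?_)
  have hφa : Ideal.Quotient.mk (Ideal.span {algebraMap R (ReesWeyl p n R h) h}) (φ a)
      = Ideal.Quotient.mk _ a :=
    Ideal.Quotient.eq.2 (mem_span_algebraMap_iff.2 (by simpa only [Algebra.smul_def] using hφ a))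
  rw [map_mul, map_mul, hφa, (quotient_commute _ _).eq]

end ReesWeyl

theorem automorphism_trivial_mod_h_is_inner_complete_general
    (p n : ℕ) (hp : p.Prime) (R : Type) [CommRing R] (hpR : (p : R) = 0) (h : R)
    (hjac : h ∈ Ideal.jacobson (⊥ : Ideal R)) (hnz : h ∈ nonZeroDivisors R)
    (φ : ReesWeyl p n R h →ₐ[R] ReesWeyl p n R h)
    (hφ : ∀ a : ReesWeyl p n R h, ∃ c : ReesWeyl p n R h,
      φ a - a = algebraMap R (ReesWeyl p n R h) h * c) :
    ∃ u : (ReesWeyl p n R h)ˣ, ∀ m : ReesWeyl p n R h,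
      φ m = (u : ReesWeyl p n R h) * m * ((u⁻¹ : (ReesWeyl p n R h)ˣ) : ReesWeyl p n R h) := by
  have := ReesWeyl.module_finite (n := n) (h := h) hp hpR
  obtain ⟨u, hφu, hu⟩ := exists_intertwiner hp hpR
    (ReesWeyl.isSMulRegular hp hpR hnz) ReesWeyl.gen_pow
    (fun i => by rw [← map_pow, ReesWeyl.gen_pow, map_zero]) ReesWeyl.gen_mul_gen
    (fun i j => by rw [← map_mul, ReesWeyl.gen_mul_gen, map_add, map_mul, AlgHom.commutes])
    ReesWeyl.gen_mul_dualGen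
    (fun i => ReesWeyl.exists_map_mul_sub_mul_eq_smul hφ (ReesWeyl.gen i))
  obtain ⟨u, rfl⟩ : IsUnit u := isUnit_of_sub_mem_span_range hjac ReesWeyl.quotient_commute
    ReesWeyl.isNilpotent_dualGen ((ReesWeyl.isUnit_factorial_pred hp hpR).pow _) hu
  have hintertwine (m : ReesWeyl p n R h) : φ m * u = u * m :=
    intertwine_of_adjoin_eq_top ReesWeyl.adjoin_range_gen (g := AlgHom.id R _)
      (Set.forall_mem_range.2 hφu) m
  exact ⟨u, fun m => (Units.eq_mul_inv_iff_mul_eq u).2 (hintertwine m)⟩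

/-- over an `h`-separable, `h`-adically complete base `R` (with `p·R = 0`,
`p` an odd prime), every `R`-algebra automorphism of `A(R)` which is the identity
modulo `h·A(R)` is conjugation by a unit of `A(R)`. -/
theorem automorphism_trivial_mod_h_is_inner_complete
    (p n : ℕ) (hp : p.Prime) (hodd : p ≠ 2) (hn : 1 ≤ n)
    (R : Type) [CommRing R] (hpR : (p : R) = 0) (h : R)
    [IsAdicComplete (Ideal.span {h}) R]
    (hnz : h ∈ nonZeroDivisors R)
    (hsep : ∀ a : R, (∃ b : R, a ^ p = h * b) → ∃ c : R, a ^ p = h ^ p * c)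
    (φ : ReesWeyl p n R h ≃ₐ[R] ReesWeyl p n R h)
    (hφ : ∀ a : ReesWeyl p n R h, ∃ c : ReesWeyl p n R h,
      φ a - a = algebraMap R (ReesWeyl p n R h) h * c) :
    ∃ u : (ReesWeyl p n R h)ˣ, ∀ m : ReesWeyl p n R h,
      φ m = (u : ReesWeyl p n R h) * m * ((u⁻¹ : (ReesWeyl p n R h)ˣ) : ReesWeyl p n R h) := by
  exact automorphism_trivial_mod_h_is_inner_complete_general p n hp R hpR h
    (IsAdicComplete.le_jacobson_bot _ (Ideal.mem_span_singleton_self h)) hnz φ.toAlgHom hφ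
end
end

section
/- Let A be an associative (not necessarily commutative) ring and h ∈ A a central nonzerodivisor such that the commutator of any two elements of A lies in hA. Then the quotient ring A/hA is commutative, and the bracket defined by {x̄, ȳ} := (the class modulo h of the unique c ∈ A with hc = xy − yx), for x, y ∈ A lifting x̄, ȳ ∈ A/hA, is well-defined, biadditive, and makes A/hA a Poisson ring: it is alternating, satisfies the Jacobi identity, and is a derivation in each argument with respect to the ring multiplication of A/hA. -/
/-!
Statement 8: Let `A` be an associative ring and `h ∈ A` a central nonzerodivisor with
`[A,A] ⊆ hA`.  Then `A/hA` is commutative and the bracket `{x̄,ȳ}` (class mod `h` of the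
unique `c` with `hc = xy − yx`) is well-defined, biadditive, alternating, satisfies the
Jacobi identity, and is a derivation in each argument — i.e. `A/hA` is a Poisson ring.
All clauses are phrased on `A`, modulo `h·A`.
-/

/-!
Write `{a, b} = h⁻¹ ⁅a, b⁆`. As `h` is central and regular, `{·, ·}` is biadditive, alternating, and
satisfies the Jacobi and Leibniz identities already on `A`, where it inherits them from the
commutator. It descends to `A/hA` because `{h u, b} = ⁅u, b⁆` lies in `hA`, by the assumption that
commutators are divisible by `h`.
-/

/-- `c` is a value of the bracket `{a, b} = h⁻¹ ⁅a, b⁆`. The bracket is encoded as a relation, so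
that speaking of it requires neither that `h` divides `⁅a, b⁆` nor that the quotient is unique. -/
def IsDividedCommutator {A : Type*} [NonUnitalNonAssocRing A] (h a b c : A) : Prop :=
  ⁅a, b⁆ = h * c

namespace IsDividedCommutator

section NonUnitalNonAssocRing

variable {A : Type*} [NonUnitalNonAssocRing A] {h a a' b b' c c' : A}

theorem unique (hreg : IsLeftRegular h) (hc : IsDividedCommutator h a b c)
    (hc' : IsDividedCommutator h a b c') : c = c' :=
  hreg (hc.symm.trans hc')

theorem zero_of_self (h a : A) : IsDividedCommutator h a a 0 := by
  rw [IsDividedCommutator, Ring.lie_def, sub_self, mul_zero]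

theorem add_left (hc : IsDividedCommutator h a b c) (hc' : IsDividedCommutator h a' b c') :
    IsDividedCommutator h (a + a') b (c + c') := by
  rw [IsDividedCommutator, mul_add, ← hc, ← hc']
  simp only [Ring.lie_def, add_mul, mul_add]
  abel

theorem add_right (hc : IsDividedCommutator h a b c) (hc' : IsDividedCommutator h a b' c') :
    IsDividedCommutator h a (b + b') (c + c') := by
  rw [IsDividedCommutator, mul_add, ← hc, ← hc']
  simp only [Ring.lie_def, add_mul, mul_add]
  abel

end NonUnitalNonAssocRing

section NonUnitalRing

variable {A : Type*} [NonUnitalRing A] {h a a' b b' c c' : A}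

theorem central_mul_left (hcentral : ∀ x, Commute h x) (u b : A) :
    IsDividedCommutator h (h * u) b ⁅u, b⁆ := by
  rw [IsDividedCommutator, Ring.lie_def, Ring.lie_def, mul_sub, mul_assoc,
    (hcentral b).symm.left_comm]

theorem central_mul_right (hcentral : ∀ x, Commute h x) (a v : A) :
    IsDividedCommutator h a (h * v) ⁅a, v⁆ := by
  rw [IsDividedCommutator, Ring.lie_def, Ring.lie_def, mul_sub, mul_assoc,
    (hcentral a).symm.left_comm]

theorem dvd_sub_of_dvd_sub (hcentral : ∀ x, Commute h x) (hreg : IsLeftRegular h)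
    (hdvd : ∀ x y : A, h ∣ ⁅x, y⁆) (ha : h ∣ a' - a) (hb : h ∣ b' - b)
    (hc : IsDividedCommutator h a b c) (hc' : IsDividedCommutator h a' b' c') : h ∣ c' - c := by
  obtain ⟨u, hu⟩ := ha
  obtain ⟨v, hv⟩ := hb
  obtain rfl : a' = a + h * u := by rw [← hu, add_sub_cancel]
  obtain rfl : b' = b + h * v := by rw [← hv, add_sub_cancel]
  have bracket_lifts : IsDividedCommutator h (a + h * u) (b + h * v)
      (c + ⁅a, v⁆ + ⁅u, b + h * v⁆) :=
    (hc.add_right (central_mul_right hcentral a v)).add_left (central_mul_left hcentral u _)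
  rw [hc'.unique hreg bracket_lifts, add_assoc, add_sub_cancel_left]
  exact dvd_add (hdvd a v) (hdvd u _)

theorem mul_right (hcentral : ∀ x, Commute h x) (hc : IsDividedCommutator h a b c)
    (hc' : IsDividedCommutator h a b' c') :
    IsDividedCommutator h a (b * b') (c * b' + b * c') := by
  calc ⁅a, b * b'⁆ = ⁅a, b⁆ * b' + b * ⁅a, b'⁆ := by
        simp only [Ring.lie_def, sub_mul, mul_sub, mul_assoc, sub_add_sub_cancel]
    _ = h * (c * b' + b * c') := by
        rw [hc, hc', mul_add, mul_assoc, (hcentral b).symm.left_comm]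

theorem lie_lie (hcentral : ∀ x, Commute h x) {ab x : A} (hab : IsDividedCommutator h a b ab)
    (hx : IsDividedCommutator h ab c x) : ⁅⁅a, b⁆, c⁆ = h * (h * x) := by
  rw [hab, central_mul_left hcentral, hx]

theorem jacobi (hcentral : ∀ x, Commute h x) (hreg : IsLeftRegular h) {ab bc ca x y z : A}
    (hab : IsDividedCommutator h a b ab) (hbc : IsDividedCommutator h b c bc)
    (hca : IsDividedCommutator h c a ca) (hx : IsDividedCommutator h ab c x)
    (hy : IsDividedCommutator h bc a y) (hz : IsDividedCommutator h ca b z) :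
    x + y + z = 0 := by
  have commutator_jacobi : ⁅⁅a, b⁆, c⁆ + ⁅⁅b, c⁆, a⁆ + ⁅⁅c, a⁆, b⁆ = 0 := by
    simp only [Ring.lie_def, sub_mul, mul_sub, mul_assoc]
    abel
  refine hreg.mul hreg ?_
  calc h * h * (x + y + z) = ⁅⁅a, b⁆, c⁆ + ⁅⁅b, c⁆, a⁆ + ⁅⁅c, a⁆, b⁆ := by
        rw [hab.lie_lie hcentral hx, hbc.lie_lie hcentral hy, hca.lie_lie hcentral hz, mul_assoc,
          mul_add, mul_add, mul_add, mul_add]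
    _ = h * h * 0 := by rw [commutator_jacobi, mul_zero]

end NonUnitalRing

end IsDividedCommutator

open IsDividedCommutator in
theorem quotient_is_poisson_ring_general {A : Type*} [NonUnitalRing A] {h : A}
    (hcentral : ∀ x, Commute h x) (hreg : IsLeftRegular h) (hdvd : ∀ x y : A, h ∣ ⁅x, y⁆) :
    (∀ x y : A, h ∣ ⁅x, y⁆) ∧
    (∀ a a' b b' c c' : A, h ∣ a' - a → h ∣ b' - b →
      IsDividedCommutator h a b c → IsDividedCommutator h a' b' c' → h ∣ c' - c) ∧
    (∀ a b b' c c' : A, IsDividedCommutator h a b c → IsDividedCommutator h a b' c' →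
      IsDividedCommutator h a (b + b') (c + c')) ∧
    (∀ a a' b c c' : A, IsDividedCommutator h a b c → IsDividedCommutator h a' b c' →
      IsDividedCommutator h (a + a') b (c + c')) ∧
    (∀ a c : A, IsDividedCommutator h a a c → c = 0) ∧
    (∀ a b c ab bc ca x y z : A,
      IsDividedCommutator h a b ab → IsDividedCommutator h b c bc → IsDividedCommutator h c a ca →
      IsDividedCommutator h ab c x → IsDividedCommutator h bc a y → IsDividedCommutator h ca b z →
      h ∣ x + y + z) ∧
    (∀ a b c u ab ac : A, IsDividedCommutator h a (b * c) u →
      IsDividedCommutator h a b ab → IsDividedCommutator h a c ac →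
      h ∣ u - (ab * c + b * ac)) := by
  refine ⟨hdvd, fun _ _ _ _ _ _ => dvd_sub_of_dvd_sub hcentral hreg hdvd,
    fun _ _ _ _ _ => add_right, fun _ _ _ _ _ => add_left,
    fun a _ hc => hc.unique hreg (zero_of_self h a), ?jacobi, ?leibniz⟩
  case jacobi =>
    intro a b c ab bc ca x y z hab hbc hca hx hy hz
    rw [jacobi hcentral hreg hab hbc hca hx hy hz]
    exact dvd_zero h
  case leibniz =>
    intro a b c u ab ac hu hab hac
    rw [hu.unique hreg (hab.mul_right hcentral hac), sub_self]
    exact dvd_zero h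

theorem quotient_is_poisson_ring
    (A : Type) [Ring A] (h : A)
    (hcentral : ∀ x : A, h * x = x * h)
    (hnzdl : ∀ x : A, h * x = 0 → x = 0)
    (hnzdr : ∀ x : A, x * h = 0 → x = 0)
    (hcommutator : ∀ x y : A, ∃ c : A, x * y - y * x = h * c) :
    -- `A/hA` is commutative
    (∀ x y : A, ∃ c : A, x * y - y * x = h * c) ∧
    -- the bracket is well-defined: independent (mod `h`) of the choice of lifts
    (∀ a a' b b' c c' : A,
      (∃ u, a' - a = h * u) → (∃ v, b' - b = h * v) →
      a * b - b * a = h * c → a' * b' - b' * a' = h * c' →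
      ∃ w, c' - c = h * w) ∧
    -- biadditive in the second argument
    (∀ a b b' c c' : A, a * b - b * a = h * c → a * b' - b' * a = h * c' →
      a * (b + b') - (b + b') * a = h * (c + c')) ∧
    -- biadditive in the first argument
    (∀ a a' b c c' : A, a * b - b * a = h * c → a' * b - b * a' = h * c' →
      (a + a') * b - b * (a + a') = h * (c + c')) ∧
    -- alternating: `{a,a} = 0`
    (∀ a c : A, a * a - a * a = h * c → c = 0) ∧
    -- Jacobi identity: `{{a,b},c} + {{b,c},a} + {{c,a},b} = 0` in `A/hA`
    (∀ a b c ab bc ca x y z : A,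
      a * b - b * a = h * ab → b * c - c * b = h * bc → c * a - a * c = h * ca →
      ab * c - c * ab = h * x → bc * a - a * bc = h * y → ca * b - b * ca = h * z →
      ∃ w, x + y + z = h * w) ∧
    -- Leibniz rule: `{a, b·c} = {a,b}·c + b·{a,c}` in `A/hA`
    (∀ a b c u ab ac : A,
      a * (b * c) - (b * c) * a = h * u → a * b - b * a = h * ab → a * c - c * a = h * ac →
      ∃ w, u - (ab * c + b * ac) = h * w) :=
  quotient_is_poisson_ring_general hcentral
    (isLeftRegular_iff_right_eq_zero_of_mul.2 hnzdl) hcommutator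
end
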